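/- For every n ≥ 2, the covering type of the compact symplectic group Sp(n) satisfies ct(Sp(n)) ≥ (8n³ + 9n² + 7n + 12)/6; that is, for every topological space Y homotopy equivalent to Sp(n) and every good cover U of Y, U has at least (8n³ + 9n² + 7n + 12)/6 members. -/

import Mathlib

/-- A good cover of `Y`: a finite family of open subsets covering `Y` such that every
nonempty intersection of (finitely many) members is contractible. -/
def IsGoodCover {Y : Type*} [TopologicalSpace Y] (U : Finset (Set Y)) : Prop :=
  (∀ s ∈ U, IsOpen s) ∧ (⋃₀ (U : Set (Set Y)) = Set.univ) ∧
    ∀ T ⊆ U, T.Nonempty → (⋂₀ (T : Set (Set Y))).Nonempty →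
      ContractibleSpace ↥(⋂₀ (T : Set (Set Y)))

/-- The compact symplectic group `Sp(n)`: `n×n` quaternionic matrices with `Aᴴ·A = 1`
(where `star` is the conjugate transpose), with the subspace topology. -/
def Sp (n : ℕ) : Type :=
  { A : Matrix (Fin n) (Fin n) (Quaternion ℝ) // star A * A = 1 }

noncomputable instance (n : ℕ) : TopologicalSpace (Sp n) :=
  inferInstanceAs (TopologicalSpace
    { A : Matrix (Fin n) (Fin n) (Quaternion ℝ) // star A * A = 1 })

/-!
Singular cohomology is taken with coefficients in `ℤ/2`. Building `Sp(k + 1)` from `Sp(k)` through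
the fibration `Sp(k) → Sp(k + 1) → S⁴ᵏ⁺³`, whose total space is covered by two open sets that
retract onto fibres and meet in `Sp(k) × S⁴ᵏ⁺²`, yields a nonzero cup product `x₃ ⋯ x₄ₙ₋₁` of
classes of degrees `3, 7, …, 4 * n - 1` on `Sp(n)`, hence on any `Y` homotopy equivalent to it.

Suppose now that a product `x ⌣ y` of degree `r` is nonzero on the union of a good cover. Then some
`r + 1` members have a common point, as otherwise the cohomology of the union would vanish in degree
`r`. The union of these members is acyclic, so both `x` and `y` restrict to nonzero classes on the
union of the remaining members: otherwise their product would vanish. Splitting off one factor after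
another removes, each time, one member more than the degree of the current product. The last two
classes, of degrees `a < b`, still leave nonzero restrictions, and a union with nonzero cohomology
in both degrees needs at least `b + 3` members.
-/

namespace CoveringType

section TupleChains

open Finsupp (single)

/-- Mod 2 chains on `n`-tuples of elements of `E`, with no continuity or nondegeneracy imposed.
Chains are graded by the number `n` of vertices, so that the complex is augmented: `n = 0` is the
empty tuple. -/
abbrev TupleChain (E : Type*) (n : ℕ) := (Fin n → E) →₀ ZMod 2

namespace TupleChain

variable {E E' F F' : Type*}

theorem linearMap_apply_eq {M : Type*} [AddCommGroup M] [Module (ZMod 2) M] {n : ℕ}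
    {f g : TupleChain E n →ₗ[ZMod 2] M} (h : ∀ v, f (single v 1) = g (single v 1))
    (c : TupleChain E n) : f c = g c :=
  LinearMap.congr_fun (Finsupp.lhom_ext' fun v => LinearMap.ext_ring (h v)) c

theorem map_mem_of_mem_supported {M : Type*} [AddCommGroup M] [Module (ZMod 2) M] {n : ℕ}
    (f : TupleChain E n →ₗ[ZMod 2] M) {s : Set (Fin n → E)} {p : Submodule (ZMod 2) M}
    (h : ∀ v ∈ s, f (single v 1) ∈ p) {c : TupleChain E n}
    (hc : c ∈ Finsupp.supported (ZMod 2) (ZMod 2) s) : f c ∈ p := by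
  rw [Finsupp.supported_eq_span_single] at hc
  refine (Submodule.span_le (p := p.comap f)).2 ?_ hc
  rintro _ ⟨v, hv, rfl⟩
  exact h v hv

theorem single_one_mem_supported {n : ℕ} {s : Set (Fin n → E)} {v : Fin n → E} (hv : v ∈ s) :
    (single v 1 : TupleChain E n) ∈ Finsupp.supported (ZMod 2) (ZMod 2) s :=
  Finsupp.single_mem_supported _ _ hv

/-- The map on chains induced by applying `f` to every vertex. -/
noncomputable def map (f : E → E') (n : ℕ) : TupleChain E n →ₗ[ZMod 2] TupleChain E' n :=
  Finsupp.lmapDomain _ _ (f ∘ ·)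

@[simp]
theorem map_single (f : E → E') {n : ℕ} (v : Fin n → E) :
    map f n (single v 1) = single (f ∘ v) 1 := by
  simp [map]

/-- The simplicial boundary: the sum of the tuples with one vertex omitted. -/
noncomputable def boundary (n : ℕ) : TupleChain E (n + 1) →ₗ[ZMod 2] TupleChain E n :=
  Finsupp.linearCombination (ZMod 2) fun v => ∑ i : Fin (n + 1), single (v ∘ i.succAbove) 1

theorem boundary_single {n : ℕ} (v : Fin (n + 1) → E) :
    boundary n (single v 1) = ∑ i : Fin (n + 1), single (v ∘ i.succAbove) 1 := by
  simp [boundary]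

theorem boundary_single_mem_supported {n : ℕ} (v : Fin (n + 1) → E) :
    boundary n (single v 1) ∈ Finsupp.supported (ZMod 2) (ZMod 2)
      (Set.range fun i : Fin (n + 1) => v ∘ i.succAbove) := by
  rw [boundary_single]
  exact sum_mem fun i _ => single_one_mem_supported ⟨i, rfl⟩

/-- The cone with apex `e`, which prepends `e` to every tuple. -/
noncomputable def cone (e : E) (n : ℕ) : TupleChain E n →ₗ[ZMod 2] TupleChain E (n + 1) :=
  Finsupp.lmapDomain _ _ (Fin.cons (α := fun _ => E) e)

@[simp]
theorem cone_single (e : E) {n : ℕ} (v : Fin n → E) :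
    cone e n (single v 1) = single (Fin.cons (α := fun _ => E) e v) 1 := by
  simp [cone]

theorem cone_mem_supported {n : ℕ} {s : Set (Fin n → E)} {t : Set (Fin (n + 1) → E)} {e : E}
    (h : ∀ v ∈ s, Fin.cons (α := fun _ => E) e v ∈ t) {c : TupleChain E n}
    (hc : c ∈ Finsupp.supported (ZMod 2) (ZMod 2) s) :
    cone e n c ∈ Finsupp.supported (ZMod 2) (ZMod 2) t := by
  refine map_mem_of_mem_supported _ (fun v hv => ?_) hc
  rw [cone_single]
  exact single_one_mem_supported (h v hv)

theorem boundary_cone (e : E) (n : ℕ) (c : TupleChain E (n + 1)) :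
    boundary (n + 1) (cone e (n + 1) c) = c + cone e n (boundary n c) := by
  refine linearMap_apply_eq (f := boundary (n + 1) ∘ₗ cone e (n + 1))
    (g := LinearMap.id + cone e n ∘ₗ boundary n) (fun v => ?_) c
  simp only [LinearMap.comp_apply, cone_single, LinearMap.add_apply, LinearMap.id_apply,
    boundary_single, map_sum]
  rw [Fin.sum_univ_succ]
  congr! 3 with i
  funext j
  cases j using Fin.cases <;> simp

theorem boundary_cone_zero (e : E) (c : TupleChain E 0) : boundary 0 (cone e 0 c) = c := by
  refine linearMap_apply_eq (f := boundary 0 ∘ₗ cone e 0) (g := LinearMap.id) (fun v => ?_) c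
  simp [boundary_single]

theorem boundary_boundary (n : ℕ) (c : TupleChain E (n + 2)) :
    boundary n (boundary (n + 1) c) = 0 := by
  -- Every tuple is the cone over its tail, so the claim follows from the boundary of a cone.
  refine linearMap_apply_eq (f := boundary n ∘ₗ boundary (n + 1)) (g := 0) (fun v => ?_) c
  obtain ⟨e, w, rfl⟩ : ∃ e w, v = Fin.cons (α := fun _ => E) e w :=
    ⟨v 0, Fin.tail v, (Fin.cons_self_tail v).symm⟩
  rw [LinearMap.comp_apply, ← cone_single, boundary_cone, map_add, LinearMap.zero_apply]
  cases n with
  | zero => rw [boundary_cone_zero, ZModModule.add_self]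
  | succ n => rw [boundary_cone, boundary_boundary n, map_zero, add_zero, ZModModule.add_self]

theorem map_boundary (f : E → E') (n : ℕ) (c : TupleChain E (n + 1)) :
    map f n (boundary n c) = boundary n (map f (n + 1) c) := by
  refine linearMap_apply_eq (f := map f n ∘ₗ boundary n) (g := boundary n ∘ₗ map f (n + 1))
    (fun v => ?_) c
  simp [boundary_single, Function.comp_assoc]

theorem map_cone (f : E → E') (e : E) (n : ℕ) (c : TupleChain E n) :
    map f (n + 1) (cone e n c) = cone (f e) n (map f n c) := by
  refine linearMap_apply_eq (f := map f (n + 1) ∘ₗ cone e n) (g := cone (f e) n ∘ₗ map f n)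
    (fun v => ?_) c
  simp only [LinearMap.comp_apply, cone_single, map_single]
  congr 1
  funext j
  cases j using Fin.cases <;> simp

section Homotopy

variable (b : ∀ n, (Fin (n + 1) → E) → E') (φ ψ : ∀ n, TupleChain E n →ₗ[ZMod 2] TupleChain E' n)

/-- The chain homotopy between `φ` and `ψ` obtained inductively by coning the discrepancy on each
tuple `v` off from the apex `b v`. -/
noncomputable def homotopyOperator : ∀ n, TupleChain E n →ₗ[ZMod 2] TupleChain E' (n + 1)
  | 0 => 0
  | n + 1 => Finsupp.linearCombination (ZMod 2) fun v => cone (b n v) (n + 1)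
      (φ (n + 1) (single v 1) + ψ (n + 1) (single v 1)
        + homotopyOperator n (boundary n (single v 1)))

theorem homotopyOperator_single {n : ℕ} (v : Fin (n + 1) → E) :
    homotopyOperator b φ ψ (n + 1) (single v 1) = cone (b n v) (n + 1)
      (φ (n + 1) (single v 1) + ψ (n + 1) (single v 1)
        + homotopyOperator b φ ψ n (boundary n (single v 1))) := by
  simp [homotopyOperator]

variable {φ ψ} in
theorem boundary_homotopyOperator (h₀ : ∀ c, φ 0 c = ψ 0 c)
    (hφ : ∀ n c, boundary n (φ (n + 1) c) = φ n (boundary n c))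
    (hψ : ∀ n c, boundary n (ψ (n + 1) c) = ψ n (boundary n c)) (n : ℕ) (c : TupleChain E (n + 1)) :
    boundary (n + 1) (homotopyOperator b φ ψ (n + 1) c) + homotopyOperator b φ ψ n (boundary n c) =
      φ (n + 1) c + ψ (n + 1) c := by
  refine linearMap_apply_eq
    (f := boundary _ ∘ₗ homotopyOperator b φ ψ _ + homotopyOperator b φ ψ _ ∘ₗ boundary _)
    (g := φ _ + ψ _) (fun v => ?_) c
  simp only [LinearMap.add_apply, LinearMap.comp_apply]
  suffices h : boundary n (φ (n + 1) (single v 1) + ψ (n + 1) (single v 1)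
      + homotopyOperator b φ ψ n (boundary n (single v 1))) = 0 by
    rw [homotopyOperator_single, boundary_cone, h, map_zero, add_zero, add_assoc,
      ZModModule.add_self, add_zero]
  simp only [map_add, hφ, hψ]
  cases n with
  | zero => simp only [h₀, ZModModule.add_self, homotopyOperator, LinearMap.zero_apply, map_zero]
  | succ n =>
    have h := boundary_homotopyOperator h₀ hφ hψ n (boundary (n + 1) (single v 1))
    rw [boundary_boundary, map_zero, add_zero] at h
    rw [h, ZModModule.add_self]

theorem map_homotopyOperator {f : E → F} {f' : E' → F'} {b₂ : ∀ n, (Fin (n + 1) → F) → F'}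
    {φ₂ ψ₂ : ∀ n, TupleChain F n →ₗ[ZMod 2] TupleChain F' n} (hb : ∀ n v, f' (b n v) = b₂ n (f ∘ v))
    (hφ : ∀ n c, map f' n (φ n c) = φ₂ n (map f n c))
    (hψ : ∀ n c, map f' n (ψ n c) = ψ₂ n (map f n c)) (n : ℕ) (c : TupleChain E n) :
    map f' (n + 1) (homotopyOperator b φ ψ n c) = homotopyOperator b₂ φ₂ ψ₂ n (map f n c) := by
  induction n with
  | zero => simp [homotopyOperator]
  | succ n ih =>
    refine linearMap_apply_eq (f := map f' _ ∘ₗ homotopyOperator b φ ψ _)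
      (g := homotopyOperator b₂ φ₂ ψ₂ _ ∘ₗ map f _) (fun v => ?_) c
    simp only [LinearMap.comp_apply, homotopyOperator_single, map_cone, hb, map_single, map_add,
      ih, map_boundary, hφ, hψ]

end Homotopy

section Subdivision

variable (b : ∀ n, (Fin (n + 1) → E) → E) {b' : ∀ n, (Fin (n + 1) → E') → E'} {f : E → E'}

/-- Barycentric subdivision, where `b` plays the role of the barycenter of a tuple. -/
noncomputable def subdivision : ∀ n, TupleChain E n →ₗ[ZMod 2] TupleChain E n
  | 0 => LinearMap.id
  | n + 1 => Finsupp.linearCombination (ZMod 2) fun v =>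
      cone (b n v) n (subdivision n (boundary n (single v 1)))

theorem subdivision_single {n : ℕ} (v : Fin (n + 1) → E) :
    subdivision b (n + 1) (single v 1) =
      cone (b n v) n (subdivision b n (boundary n (single v 1))) := by
  simp [subdivision]

theorem boundary_subdivision (n : ℕ) (c : TupleChain E (n + 1)) :
    boundary n (subdivision b (n + 1) c) = subdivision b n (boundary n c) := by
  refine linearMap_apply_eq (f := boundary _ ∘ₗ subdivision b _)
    (g := subdivision b _ ∘ₗ boundary _) (fun v => ?_) c
  simp only [LinearMap.comp_apply, subdivision_single]
  cases n with
  | zero => rw [boundary_cone_zero]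
  | succ n => rw [boundary_cone, boundary_subdivision n, boundary_boundary, map_zero, map_zero,
      add_zero]

variable {b} in
theorem map_subdivision (hb : ∀ n v, f (b n v) = b' n (f ∘ v)) (n : ℕ) (c : TupleChain E n) :
    map f n (subdivision b n c) = subdivision b' n (map f n c) := by
  induction n with
  | zero => simp [subdivision]
  | succ n ih =>
    refine linearMap_apply_eq (f := map f _ ∘ₗ subdivision b _) (g := subdivision b' _ ∘ₗ map f _)
      (fun v => ?_) c
    simp only [LinearMap.comp_apply, subdivision_single, map_cone, hb, ih, map_boundary, map_single]

/-- The chain homotopy from the identity to barycentric subdivision. -/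
noncomputable def subdivisionHomotopy : ∀ n, TupleChain E n →ₗ[ZMod 2] TupleChain E (n + 1) :=
  homotopyOperator b (fun _ => LinearMap.id) (subdivision b)

theorem boundary_subdivisionHomotopy (n : ℕ) (c : TupleChain E (n + 1)) :
    boundary (n + 1) (subdivisionHomotopy b (n + 1) c) + subdivisionHomotopy b n (boundary n c) =
      c + subdivision b (n + 1) c :=
  boundary_homotopyOperator (φ := fun _ => LinearMap.id) b (fun _ => rfl) (fun _ _ => rfl)
    (boundary_subdivision b) n c

variable {b} in
theorem map_subdivisionHomotopy (hb : ∀ n v, f (b n v) = b' n (f ∘ v)) (n : ℕ)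
    (c : TupleChain E n) :
    map f (n + 1) (subdivisionHomotopy b n c) = subdivisionHomotopy b' n (map f n c) :=
  map_homotopyOperator _ _ _ hb (fun _ _ => rfl) (map_subdivision hb) n c

theorem boundary_subdivision_pow (m n : ℕ) (c : TupleChain E (n + 1)) :
    boundary n ((subdivision b (n + 1) ^ m) c) = (subdivision b n ^ m) (boundary n c) := by
  induction m with
  | zero => rfl
  | succ m ih => simp only [pow_succ', Module.End.mul_apply, boundary_subdivision, ih]

variable {b} in
theorem map_subdivision_pow (hb : ∀ n v, f (b n v) = b' n (f ∘ v)) (m n : ℕ)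
    (c : TupleChain E n) :
    map f n ((subdivision b n ^ m) c) = (subdivision b' n ^ m) (map f n c) := by
  induction m with
  | zero => rfl
  | succ m ih => simp only [pow_succ', Module.End.mul_apply, map_subdivision hb, ih]

/-- The chain homotopy from the identity to the `m`-fold barycentric subdivision. -/
noncomputable def iteratedSubdivisionHomotopy (m n : ℕ) :
    TupleChain E n →ₗ[ZMod 2] TupleChain E (n + 1) :=
  ∑ i ∈ Finset.range m, subdivisionHomotopy b n ∘ₗ subdivision b n ^ i

theorem iteratedSubdivisionHomotopy_succ (m n : ℕ) (c : TupleChain E n) :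
    iteratedSubdivisionHomotopy b (m + 1) n c =
      iteratedSubdivisionHomotopy b m n c + subdivisionHomotopy b n ((subdivision b n ^ m) c) := by
  simp [iteratedSubdivisionHomotopy, Finset.sum_range_succ]

theorem boundary_iteratedSubdivisionHomotopy (m n : ℕ) (c : TupleChain E (n + 1)) :
    boundary (n + 1) (iteratedSubdivisionHomotopy b m (n + 1) c) +
      iteratedSubdivisionHomotopy b m n (boundary n c) = c + (subdivision b (n + 1) ^ m) c := by
  induction m with
  | zero => simp [iteratedSubdivisionHomotopy, ZModModule.add_self]
  | succ m ih =>
    have h := boundary_subdivisionHomotopy b n ((subdivision b (n + 1) ^ m) c)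
    rw [boundary_subdivision_pow] at h
    simp only [iteratedSubdivisionHomotopy_succ, map_add]
    rw [add_add_add_comm, ih, h, ZModModule.add_add_add_cancel, pow_succ', Module.End.mul_apply]

variable {b} in
theorem map_iteratedSubdivisionHomotopy (hb : ∀ n v, f (b n v) = b' n (f ∘ v)) (m n : ℕ)
    (c : TupleChain E n) :
    map f (n + 1) (iteratedSubdivisionHomotopy b m n c) =
      iteratedSubdivisionHomotopy b' m n (map f n c) := by
  simp [iteratedSubdivisionHomotopy, map_subdivisionHomotopy hb, map_subdivision_pow hb]

end Subdivision

end TupleChain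

end TupleChains

section AffineSimplices

open Set
open Finsupp (single)

/-- The standard simplex with `n` vertices, which has dimension `n - 1` and is empty for `n = 0`. -/
abbrev Simplex (n : ℕ) := ↥(stdSimplex ℝ (Fin n))

theorem Simplex.eq_of_zero {Z : Type*} [TopologicalSpace Z] (σ τ : C(Simplex 0, Z)) : σ = τ := by
  ext t
  exact absurd t.2.2 (by simp)

section Affine

variable {V : Type*} [AddCommGroup V] [Module ℝ V] [TopologicalSpace V] [ContinuousAdd V]
  [ContinuousSMul ℝ V] {K : Set V} (hK : Convex ℝ K)
variable {V' : Type*} [AddCommGroup V'] [Module ℝ V'] [TopologicalSpace V'] [ContinuousAdd V']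
  [ContinuousSMul ℝ V'] {K' : Set V'} (hK' : Convex ℝ K')

/-- The affine singular simplex in the convex set `K` with a given tuple of vertices. -/
noncomputable def affineSimplex {n : ℕ} (v : Fin n → K) : C(Simplex n, K) where
  toFun t := ⟨∑ i, t.1 i • (v i : V), hK.sum_mem (fun i _ => t.2.1 i) t.2.2 (fun i _ => (v i).2)⟩
  continuous_toFun := by
    refine (continuous_finsetSum _ fun i _ => ?_).subtype_mk _
    exact ((continuous_apply i).comp continuous_subtype_val).smul continuous_const

theorem coe_affineSimplex {n : ℕ} (v : Fin n → K) (t : Simplex n) :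
    (affineSimplex hK v t : V) = ∑ i, t.1 i • (v i : V) := rfl

theorem affineSimplex_mem {n : ℕ} (v : Fin n → K) (t : Simplex n) {C : Set V} (hC : Convex ℝ C)
    (hv : ∀ i, (v i : V) ∈ C) : (affineSimplex hK v t : V) ∈ C :=
  hC.sum_mem (fun i _ => t.2.1 i) t.2.2 fun i _ => hv i

theorem affineSimplex_vertex {n : ℕ} (v : Fin n → K) (i : Fin n) :
    affineSimplex hK v (stdSimplex.vertex i) = v i := by
  ext
  simp [coe_affineSimplex, Pi.single_apply]

/-- Continuous maps between convex sets that carry affine simplices to affine simplices, that is,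
restrictions of affine maps. -/
def PreservesAffineSimplices (f : C(K, K')) : Prop :=
  ∀ (n : ℕ) (v : Fin n → K), f.comp (affineSimplex hK v) = affineSimplex hK' (f ∘ v)

theorem preservesAffineSimplices_affineSimplex {n : ℕ} (v : Fin n → K) :
    PreservesAffineSimplices (convex_stdSimplex ℝ (Fin n)) hK (affineSimplex hK v) := by
  intro m w
  ext t
  simp only [ContinuousMap.comp_apply, coe_affineSimplex, Function.comp_apply, Finset.smul_sum,
    Finset.sum_apply, Pi.smul_apply, Finset.sum_smul, smul_eq_mul, mul_smul]
  rw [Finset.sum_comm]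

theorem affineSimplex_vertex_eq_id (n : ℕ) :
    affineSimplex (convex_stdSimplex ℝ (Fin n)) stdSimplex.vertex =
      ContinuousMap.id (Simplex n) := by
  ext1 t
  refine Subtype.ext ((coe_affineSimplex _ _ _).trans (funext fun j => ?_))
  simp [Pi.single_apply]

/-- The barycenter of a nonempty tuple of points of a convex set. -/
noncomputable def tupleBarycenter (n : ℕ) (v : Fin (n + 1) → K) : K :=
  affineSimplex hK v stdSimplex.barycenter

variable {hK hK'} in
theorem PreservesAffineSimplices.map_tupleBarycenter {f : C(K, K')}
    (hf : PreservesAffineSimplices hK hK' f) (n : ℕ) (v : Fin (n + 1) → K) :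
    f (tupleBarycenter hK n v) = tupleBarycenter hK' n (f ∘ v) :=
  DFunLike.congr_fun (hf _ v) _

end Affine

/-- The map of standard simplices that sends the vertex `i` to the vertex `θ i`. -/
noncomputable def simplexMap {p q : ℕ} (θ : Fin p → Fin q) : C(Simplex p, Simplex q) :=
  affineSimplex (convex_stdSimplex ℝ (Fin q)) (stdSimplex.vertex ∘ θ)

theorem simplexMap_comp_vertex {p q : ℕ} (θ : Fin p → Fin q) :
    simplexMap θ ∘ stdSimplex.vertex = stdSimplex.vertex ∘ θ :=
  funext fun i => affineSimplex_vertex _ _ i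

theorem preservesAffineSimplices_simplexMap {p q : ℕ} (θ : Fin p → Fin q) :
    PreservesAffineSimplices (convex_stdSimplex ℝ _) (convex_stdSimplex ℝ _) (simplexMap θ) :=
  preservesAffineSimplices_affineSimplex _ _

theorem affineSimplex_comp_simplexMap {V : Type*} [AddCommGroup V] [Module ℝ V]
    [TopologicalSpace V] [ContinuousAdd V] [ContinuousSMul ℝ V] {K : Set V} (hK : Convex ℝ K)
    {p q : ℕ} (v : Fin q → K) (θ : Fin p → Fin q) :
    (affineSimplex hK v).comp (simplexMap θ) = affineSimplex hK (v ∘ θ) := by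
  rw [simplexMap, preservesAffineSimplices_affineSimplex hK v]
  congr 1
  funext i
  exact affineSimplex_vertex hK v _

theorem simplexMap_comp {p q r : ℕ} (η : Fin q → Fin r) (θ : Fin p → Fin q) :
    (simplexMap η).comp (simplexMap θ) = simplexMap (η ∘ θ) :=
  affineSimplex_comp_simplexMap _ _ _

theorem simplexMap_id {p : ℕ} : simplexMap (id : Fin p → Fin p) = ContinuousMap.id _ :=
  affineSimplex_vertex_eq_id p

section Subdivision

variable {V : Type*} [SeminormedAddCommGroup V] [NormedSpace ℝ V] {K : Set V} (hK : Convex ℝ K)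

theorem dist_tupleBarycenter_le (n : ℕ) (v : Fin (n + 1) → K) {d : ℝ} (i : Fin (n + 1))
    (h : ∀ j, dist (v i) (v j) ≤ d) :
    dist (v i) (tupleBarycenter hK n v) ≤ (n : ℝ) / (n + 1) * d := by
  have hsub : (v i : V) - tupleBarycenter hK n v = ∑ j, ((n : ℝ) + 1)⁻¹ • ((v i : V) - v j) := by
    simp only [tupleBarycenter, coe_affineSimplex, stdSimplex.barycenter_apply, Fintype.card_fin,
      ← Finset.smul_sum, Finset.sum_sub_distrib, Finset.sum_const, Finset.card_univ, smul_sub,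
      Nat.cast_add, Nat.cast_one]
    rw [← Nat.cast_smul_eq_nsmul ℝ, smul_smul]
    push_cast
    rw [inv_mul_cancel₀ (by positivity), one_smul]
  rw [Subtype.dist_eq, dist_eq_norm, hsub,
    ← Finset.sum_erase (a := i) _ (by rw [sub_self, smul_zero])]
  refine (norm_sum_le_of_le (n := fun _ => ((n : ℝ) + 1)⁻¹ * d) _ fun j _ => ?_).trans_eq ?_
  · rw [norm_smul, Real.norm_of_nonneg (by positivity), ← dist_eq_norm, ← Subtype.dist_eq]
    gcongr
    exact h j
  · rw [Finset.sum_const, Finset.card_erase_of_mem (Finset.mem_univ i), Finset.card_univ,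
      Fintype.card_fin, Nat.add_sub_cancel, nsmul_eq_mul]
    ring

/-- The tuples in the convex hull of `v` whose entries are pairwise at distance at most `d`. -/
def fineTuples {p : ℕ} (v : Fin p → K) (d : ℝ) (q : ℕ) : Set (Fin q → K) :=
  {w | (∀ i, (w i : V) ∈ convexHull ℝ (range fun j => (v j : V))) ∧ ∀ i j, dist (w i) (w j) ≤ d}

theorem mem_fineTuples_self {p : ℕ} {v : Fin p → K} {d : ℝ} (h : ∀ i j, dist (v i) (v j) ≤ d) :
    v ∈ fineTuples v d p :=
  ⟨fun i => subset_convexHull _ _ ⟨i, rfl⟩, h⟩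

theorem fineTuples_mono {p q : ℕ} {v : Fin p → K} {d d' : ℝ} (h : d ≤ d') :
    fineTuples v d q ⊆ fineTuples v d' q :=
  fun _ hw => ⟨hw.1, fun i j => (hw.2 i j).trans h⟩

theorem fineTuples_comp_subset {p p' q : ℕ} (v : Fin p → K) (θ : Fin p' → Fin p) (d : ℝ) :
    fineTuples (v ∘ θ) d q ⊆ fineTuples v d q :=
  fun _ hw => ⟨fun i => convexHull_mono (range_comp_subset_range θ fun j => (v j : V)) (hw.1 i),
    hw.2⟩

theorem cons_tupleBarycenter_mem_fineTuples {p q : ℕ} {v : Fin (p + 1) → K} {d : ℝ}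
    (hv : ∀ i, dist (v i) (tupleBarycenter hK p v) ≤ d) {w : Fin q → K}
    (hw : w ∈ fineTuples v d q) :
    (Fin.cons (tupleBarycenter hK p v) w : Fin (q + 1) → K) ∈ fineTuples v d (q + 1) := by
  have hball : ∀ i, dist (w i) (tupleBarycenter hK p v) ≤ d := fun i =>
    convexHull_min (s := range fun j => (v j : V)) (range_subset_iff.2 hv)
      (convex_closedBall (tupleBarycenter hK p v : V) d) (hw.1 i)
  refine ⟨Fin.cases ?_ fun j => hw.1 j, Fin.cases (Fin.cases ?_ fun j => ?_) fun j =>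
    Fin.cases ?_ fun k => hw.2 j k⟩
  · exact affineSimplex_mem hK v _ (convex_convexHull ℝ _) fun i => subset_convexHull ℝ _ ⟨i, rfl⟩
  · simpa using dist_nonneg.trans (hv 0)
  · simpa [dist_comm] using hball j
  · simpa using hball j

theorem natCast_div_add_one_le {p N : ℕ} (hp : p ≤ N) :
    (p : ℝ) / (p + 1) ≤ (N : ℝ) / (N + 1) := by
  have : (p : ℝ) ≤ N := by exact_mod_cast hp
  rw [div_le_div_iff₀ (by positivity) (by positivity)]
  linarith

namespace TupleChain

theorem map_boundary_single_mem_supported {n q : ℕ} {v : Fin (n + 1) → K} {d : ℝ}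
    (f : TupleChain K n →ₗ[ZMod 2] TupleChain K q)
    (h : ∀ i : Fin (n + 1), f (single (v ∘ i.succAbove) 1) ∈
      Finsupp.supported (ZMod 2) (ZMod 2) (fineTuples (v ∘ i.succAbove) d q)) :
    f (boundary n (single v 1)) ∈ Finsupp.supported (ZMod 2) (ZMod 2) (fineTuples v d q) := by
  refine map_mem_of_mem_supported f ?_ (boundary_single_mem_supported v)
  rintro _ ⟨i, rfl⟩
  exact Finsupp.supported_mono (fineTuples_comp_subset v _ d) (h i)

theorem subdivision_single_mem_supported {N p : ℕ} (hp : p ≤ N + 1) (v : Fin p → K) {d : ℝ}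
    (h : ∀ i j, dist (v i) (v j) ≤ d) :
    subdivision (tupleBarycenter hK) p (single v 1) ∈
      Finsupp.supported (ZMod 2) (ZMod 2) (fineTuples v ((N : ℝ) / (N + 1) * d) p) := by
  induction p with
  | zero => exact single_one_mem_supported (mem_fineTuples_self fun i => i.elim0)
  | succ p ih =>
    rw [subdivision_single]
    have hd : 0 ≤ d := dist_nonneg.trans (h 0 0)
    refine cone_mem_supported (fun w hw => cons_tupleBarycenter_mem_fineTuples hK (fun i => ?_) hw)
      (map_boundary_single_mem_supported _ fun i => ih (by lia) _ fun _ _ => h _ _)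
    exact (dist_tupleBarycenter_le hK p v i (h i)).trans
      (mul_le_mul_of_nonneg_right (natCast_div_add_one_le (by lia)) hd)

theorem subdivisionHomotopy_single_mem_supported (p : ℕ) (v : Fin p → K) {d : ℝ}
    (h : ∀ i j, dist (v i) (v j) ≤ d) :
    subdivisionHomotopy (tupleBarycenter hK) p (single v 1) ∈
      Finsupp.supported (ZMod 2) (ZMod 2) (fineTuples v d (p + 1)) := by
  induction p with
  | zero => exact zero_mem _
  | succ p ih =>
    rw [subdivisionHomotopy, homotopyOperator_single, ← subdivisionHomotopy]
    have hd : 0 ≤ d := dist_nonneg.trans (h 0 0)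
    have hpd : (p : ℝ) / (p + 1) * d ≤ d :=
      mul_le_of_le_one_left hd ((div_le_one (by positivity)).2 (by linarith))
    refine cone_mem_supported (fun w hw => cons_tupleBarycenter_mem_fineTuples hK
      (fun i => (dist_tupleBarycenter_le hK p v i (h i)).trans hpd) hw)
      (add_mem (add_mem ?_ ?_) ?_)
    · exact single_one_mem_supported (mem_fineTuples_self h)
    · exact Finsupp.supported_mono (fineTuples_mono hpd)
        (subdivision_single_mem_supported hK le_rfl v h)
    · exact map_boundary_single_mem_supported _ fun i => ih _ fun _ _ => h _ _

theorem subdivision_pow_single_mem_supported {N p : ℕ} (hp : p ≤ N + 1) (v : Fin p → K) {d : ℝ}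
    (h : ∀ i j, dist (v i) (v j) ≤ d) (m : ℕ) :
    (subdivision (tupleBarycenter hK) p ^ m) (single v 1) ∈ Finsupp.supported (ZMod 2) (ZMod 2)
      {w : Fin p → K | ∀ i j, dist (w i) (w j) ≤ ((N : ℝ) / (N + 1)) ^ m * d} := by
  induction m with
  | zero => exact single_one_mem_supported (by simpa using h)
  | succ m ih =>
    rw [pow_succ' (subdivision _ p), Module.End.mul_apply]
    refine map_mem_of_mem_supported _ (fun w hw => ?_) ih
    refine Finsupp.supported_mono (fun u hu i j => ?_)
      (subdivision_single_mem_supported hK hp w hw)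
    rw [pow_succ', mul_assoc]
    exact hu.2 i j

end TupleChain

end Subdivision

end AffineSimplices

section Cochains

open Set
open Finsupp (single)

/-- Mod 2 singular cochains, graded like `TupleChain` by the number of vertices, so that they form
the augmented cochain complex and the cohomology below is reduced: degree `d` cohomology lives in
grade `d + 1`. -/
abbrev Cochain (Z : Type*) [TopologicalSpace Z] (n : ℕ) := C(Simplex n, Z) → ZMod 2

variable {X Y Z : Type*} [TopologicalSpace X] [TopologicalSpace Y] [TopologicalSpace Z] {n p : ℕ}

/-- The singular coboundary. -/
noncomputable def coboundary : Cochain Z n →ₗ[ZMod 2] Cochain Z (n + 1) :=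
  ∑ i : Fin (n + 1), LinearMap.funLeft _ _ fun σ => σ.comp (simplexMap i.succAbove)

theorem coboundary_apply (α : Cochain Z n) (σ : C(Simplex (n + 1), Z)) :
    coboundary α σ = ∑ i : Fin (n + 1), α (σ.comp (simplexMap i.succAbove)) := by
  simp [coboundary, LinearMap.funLeft_apply]

/-- The cochain map induced by a continuous map. -/
def pullback (f : C(X, Z)) : Cochain Z n →ₗ[ZMod 2] Cochain X n :=
  LinearMap.funLeft _ _ f.comp

theorem pullback_apply (f : C(X, Z)) (α : Cochain Z n) (σ : C(Simplex n, X)) :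
    pullback f α σ = α (f.comp σ) := rfl

theorem coboundary_pullback (f : C(X, Z)) (α : Cochain Z n) :
    coboundary (pullback f α) = pullback f (coboundary α) := by
  ext σ
  simp only [coboundary_apply, pullback_apply, ContinuousMap.comp_assoc]

theorem pullback_pullback (f : C(X, Z)) (g : C(Y, X)) (α : Cochain Z n) :
    pullback g (pullback f α) = pullback (f.comp g) α := rfl

theorem pullback_id (α : Cochain Z n) : pullback (ContinuousMap.id Z) α = α := rfl

/-- The singular simplices whose image lies in a given set. -/
def simplicesIn (V : Set Z) (n : ℕ) : Set C(Simplex n, Z) := {σ | ∀ t, σ t ∈ V}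

theorem comp_mem_simplicesIn {V : Set Z} {σ : C(Simplex n, Z)} (h : σ ∈ simplicesIn V n)
    (f : C(Simplex p, Simplex n)) : σ.comp f ∈ simplicesIn V p :=
  fun t => h (f t)

theorem mapsTo_comp_simplicesIn {V : Set X} {W : Set Z} {f : C(X, Z)} (hf : MapsTo f V W) :
    MapsTo f.comp (simplicesIn V n) (simplicesIn W n) :=
  fun _ hσ t => hf (hσ t)

theorem simplicesIn_mono {V W : Set Z} (h : V ⊆ W) : simplicesIn V n ⊆ simplicesIn W n :=
  fun _ hσ t => h (hσ t)

theorem eqOn_coboundary {V : Set Z} {α β : Cochain Z n} (h : EqOn α β (simplicesIn V n)) :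
    EqOn (coboundary α) (coboundary β) (simplicesIn V (n + 1)) := fun σ hσ => by
  simp only [coboundary_apply]
  exact Finset.sum_congr rfl fun i _ => h (comp_mem_simplicesIn hσ _)

/-- Cochains whose restriction to the subspace `V` is a cocycle. -/
def IsCocycleOn (V : Set Z) (α : Cochain Z n) : Prop :=
  EqOn (coboundary α) 0 (simplicesIn V (n + 1))

/-- Cochains whose restriction to the subspace `V` is a coboundary. -/
def IsCoboundaryOn (V : Set Z) : ∀ {n : ℕ}, Cochain Z n → Prop
  | 0, α => EqOn α 0 (simplicesIn V 0)
  | _ + 1, α => ∃ β : Cochain Z _, EqOn α (coboundary β) (simplicesIn V _)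

/-- `V` has vanishing reduced cohomology in degree `n - 1`. -/
def IsAcyclicOn (n : ℕ) (V : Set Z) : Prop :=
  ∀ α : Cochain Z n, IsCocycleOn V α → IsCoboundaryOn V α

section Evaluation

variable {V : Type*} [AddCommGroup V] [Module ℝ V] [TopologicalSpace V] [ContinuousAdd V]
  [ContinuousSMul ℝ V] {K : Set V} (hK : Convex ℝ K)
variable {V' : Type*} [AddCommGroup V'] [Module ℝ V'] [TopologicalSpace V'] [ContinuousAdd V']
  [ContinuousSMul ℝ V'] {K' : Set V'} (hK' : Convex ℝ K')

/-- Evaluation of `α` on the singular chain obtained by composing `σ` with the affine simplices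
spanned by the tuples of a tuple chain. -/
noncomputable def evaluate (σ : C(K, Z)) (α : Cochain Z n) : TupleChain K n →ₗ[ZMod 2] ZMod 2 :=
  Finsupp.linearCombination (ZMod 2) fun v => α (σ.comp (affineSimplex hK v))

theorem evaluate_single (σ : C(K, Z)) (α : Cochain Z n) (v : Fin n → K) :
    evaluate hK σ α (single v 1) = α (σ.comp (affineSimplex hK v)) := by
  simp [evaluate]

theorem evaluate_boundary (σ : C(K, Z)) (α : Cochain Z n) (c : TupleChain K (n + 1)) :
    evaluate hK σ α (TupleChain.boundary n c) = evaluate hK σ (coboundary α) c := by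
  refine TupleChain.linearMap_apply_eq (f := evaluate hK σ α ∘ₗ TupleChain.boundary n)
    (fun v => ?_) c
  simp only [LinearMap.comp_apply, TupleChain.boundary_single, map_sum, evaluate_single,
    coboundary_apply, ContinuousMap.comp_assoc, affineSimplex_comp_simplexMap]

variable {hK hK'} in
theorem evaluate_map {f : C(K, K')} (hf : PreservesAffineSimplices hK hK' f) (σ : C(K', Z))
    (α : Cochain Z n) (c : TupleChain K n) :
    evaluate hK' σ α (TupleChain.map f n c) = evaluate hK (σ.comp f) α c := by
  refine TupleChain.linearMap_apply_eq (f := evaluate hK' σ α ∘ₗ TupleChain.map f n)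
    (fun v => ?_) c
  simp only [LinearMap.comp_apply, TupleChain.map_single, evaluate_single,
    ContinuousMap.comp_assoc, hf _ _]

theorem evaluate_eq_zero {s : Set C(Simplex n, Z)} {σ : C(K, Z)} {α : Cochain Z n}
    (hα : EqOn α 0 s) {c : TupleChain K n}
    (hc : c ∈ Finsupp.supported (ZMod 2) (ZMod 2) {w | σ.comp (affineSimplex hK w) ∈ s}) :
    evaluate hK σ α c = 0 := by
  refine (Submodule.mem_bot (ZMod 2)).1
    (TupleChain.map_mem_of_mem_supported (evaluate hK σ α) (fun w hw => ?_) hc)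
  rw [evaluate_single, Submodule.mem_bot]
  exact hα hw

theorem evaluate_eq_zero_of_forall_mem {W : Set Z} {σ : C(K, Z)} (hσ : ∀ x, σ x ∈ W)
    {α : Cochain Z n} (hα : EqOn α 0 (simplicesIn W n)) (c : TupleChain K n) :
    evaluate hK σ α c = 0 :=
  evaluate_eq_zero hK hα fun _ _ _ => hσ _

end Evaluation

theorem evaluate_single_vertex (α : Cochain Z n) (σ : C(Simplex n, Z)) :
    evaluate (convex_stdSimplex ℝ _) σ α (single stdSimplex.vertex 1) = α σ := by
  rw [evaluate_single, affineSimplex_vertex_eq_id, ContinuousMap.comp_id]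

theorem coboundary_coboundary (α : Cochain Z n) : coboundary (coboundary α) = 0 := by
  ext σ
  rw [← evaluate_single_vertex (coboundary _), ← evaluate_boundary, ← evaluate_boundary,
    TupleChain.boundary_boundary, map_zero, Pi.zero_apply]

section Basic

variable {V W : Set Z} {α β : Cochain Z n}

theorem isCoboundaryOn_coboundary (V : Set Z) (α : Cochain Z n) :
    IsCoboundaryOn V (coboundary α) :=
  ⟨α, fun _ _ => rfl⟩

theorem isCocycleOn_coboundary (V : Set Z) (α : Cochain Z n) : IsCocycleOn V (coboundary α) := by
  rw [IsCocycleOn, coboundary_coboundary]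
  exact eqOn_refl _ _

theorem isCoboundaryOn_zero : IsCoboundaryOn V (0 : Cochain Z n) := by
  cases n with
  | zero => exact eqOn_refl _ _
  | succ n => exact ⟨0, fun σ _ => by rw [map_zero]⟩

theorem isCocycleOn_zero : IsCocycleOn V (0 : Cochain Z n) := fun σ _ => by rw [map_zero]

namespace IsCocycleOn

theorem mono (h : IsCocycleOn W α) (hVW : V ⊆ W) : IsCocycleOn V α :=
  EqOn.mono (simplicesIn_mono hVW) h

theorem congr (h : IsCocycleOn V α) (e : EqOn β α (simplicesIn V n)) : IsCocycleOn V β :=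
  (eqOn_coboundary e).trans h

theorem add (hα : IsCocycleOn V α) (hβ : IsCocycleOn V β) : IsCocycleOn V (α + β) :=
  fun σ hσ => by rw [map_add, Pi.add_apply, hα hσ, hβ hσ, Pi.zero_apply, add_zero]

theorem pullback {V : Set X} {f : C(X, Z)} (h : IsCocycleOn W α) (hf : MapsTo f V W) :
    IsCocycleOn V (pullback f α) := by
  rw [IsCocycleOn, coboundary_pullback]
  exact fun σ hσ => h (mapsTo_comp_simplicesIn hf hσ)

end IsCocycleOn

namespace IsCoboundaryOn

theorem mono (h : IsCoboundaryOn W α) (hVW : V ⊆ W) : IsCoboundaryOn V α := by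
  cases n with
  | zero => exact EqOn.mono (simplicesIn_mono hVW) h
  | succ n => exact h.imp fun β hβ => hβ.mono (simplicesIn_mono hVW)

theorem add (hα : IsCoboundaryOn V α) (hβ : IsCoboundaryOn V β) : IsCoboundaryOn V (α + β) := by
  cases n with
  | zero => exact fun σ hσ => by rw [Pi.add_apply, hα hσ, hβ hσ, Pi.zero_apply, add_zero]
  | succ n =>
    obtain ⟨γ, hγ⟩ := hα
    obtain ⟨δ, hδ⟩ := hβ
    exact ⟨γ + δ, fun σ hσ => by rw [Pi.add_apply, hγ hσ, hδ hσ, map_add, Pi.add_apply]⟩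

theorem of_add (h : IsCoboundaryOn V (α + β)) (hβ : IsCoboundaryOn V β) : IsCoboundaryOn V α := by
  have hsum := h.add hβ
  rwa [add_assoc, ZModModule.add_self, add_zero] at hsum

theorem pullback {V : Set X} {f : C(X, Z)} (h : IsCoboundaryOn W α) (hf : MapsTo f V W) :
    IsCoboundaryOn V (pullback f α) := by
  cases n with
  | zero => exact fun σ hσ => h (mapsTo_comp_simplicesIn hf hσ)
  | succ n =>
    obtain ⟨β, hβ⟩ := h
    refine ⟨CoveringType.pullback f β, ?_⟩
    rw [coboundary_pullback]
    exact fun σ hσ => hβ (mapsTo_comp_simplicesIn hf hσ)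

end IsCoboundaryOn

end Basic

section SmallSimplices

/-- The cochain `α` evaluated on the `m`-fold barycentric subdivision of a simplex. -/
noncomputable def subdivide (m : ℕ) (α : Cochain Z n) : Cochain Z n := fun σ =>
  evaluate (convex_stdSimplex ℝ _) σ α
    ((TupleChain.subdivision (tupleBarycenter (convex_stdSimplex ℝ _)) n ^ m)
      (single stdSimplex.vertex 1))

/-- The cochain homotopy between the identity and `subdivide m`. -/
noncomputable def subdivideHomotopy (m : ℕ) (α : Cochain Z (n + 1)) : Cochain Z n := fun σ =>
  evaluate (convex_stdSimplex ℝ _) σ α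
    (TupleChain.iteratedSubdivisionHomotopy (tupleBarycenter (convex_stdSimplex ℝ _)) m n
      (single stdSimplex.vertex 1))

theorem coboundary_subdivideHomotopy_apply (m : ℕ) (α : Cochain Z (n + 1))
    (σ : C(Simplex (n + 1), Z)) :
    coboundary (subdivideHomotopy m α) σ = evaluate (convex_stdSimplex ℝ _) σ α
      (TupleChain.iteratedSubdivisionHomotopy (tupleBarycenter (convex_stdSimplex ℝ _)) m n
        (TupleChain.boundary n (single stdSimplex.vertex 1))) := by
  rw [coboundary_apply, TupleChain.boundary_single, map_sum, map_sum]
  refine Finset.sum_congr rfl fun i _ => ?_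
  have haff := preservesAffineSimplices_simplexMap i.succAbove
  rw [subdivideHomotopy, ← evaluate_map haff,
    TupleChain.map_iteratedSubdivisionHomotopy haff.map_tupleBarycenter, TupleChain.map_single,
    simplexMap_comp_vertex]

theorem coboundary_subdivideHomotopy (m : ℕ) (α : Cochain Z (n + 1)) :
    subdivideHomotopy m (coboundary α) + coboundary (subdivideHomotopy m α) =
      α + subdivide m α := by
  ext σ
  rw [Pi.add_apply, coboundary_subdivideHomotopy_apply, subdivideHomotopy, ← evaluate_boundary,
    ← map_add, TupleChain.boundary_iteratedSubdivisionHomotopy, map_add,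
    evaluate_single_vertex]
  rfl

theorem subdivideHomotopy_succ_apply (m : ℕ) (α : Cochain Z (n + 1)) (σ : C(Simplex n, Z)) :
    subdivideHomotopy (m + 1) α σ = subdivideHomotopy m α σ + evaluate (convex_stdSimplex ℝ _) σ α
      (TupleChain.subdivisionHomotopy (tupleBarycenter (convex_stdSimplex ℝ _)) n
        ((TupleChain.subdivision (tupleBarycenter (convex_stdSimplex ℝ _)) n ^ m)
          (single stdSimplex.vertex 1))) := by
  simp only [subdivideHomotopy, TupleChain.iteratedSubdivisionHomotopy_succ, map_add]

theorem subdivideHomotopy_eqOn_zero {V : Set Z} {α : Cochain Z (n + 1)}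
    (hα : EqOn α 0 (simplicesIn V (n + 1))) (m : ℕ) :
    EqOn (subdivideHomotopy m α) 0 (simplicesIn V n) :=
  fun _ hσ => evaluate_eq_zero_of_forall_mem _ hσ hα _

variable {A B : Set Z} (hA : IsOpen A) (hB : IsOpen B)

include hA hB

theorem exists_forall_dist_lt_comp_mem {σ : C(Simplex n, Z)} (hσ : σ ∈ simplicesIn (A ∪ B) n) :
    ∃ ε > 0, ∀ (p : ℕ) (w : Fin p → Simplex n), (∀ i j, dist (w i) (w j) < ε) →
      σ.comp (affineSimplex (convex_stdSimplex ℝ _) w) ∈ simplicesIn A p ∪ simplicesIn B p := by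
  obtain ⟨ε, hε, h⟩ := lebesgue_number_lemma_of_metric (s := (univ : Set (Simplex n)))
    (c := fun b : Bool => bif b then σ ⁻¹' A else σ ⁻¹' B) isCompact_univ
    (Bool.forall_bool.2 ⟨hB.preimage σ.continuous, hA.preimage σ.continuous⟩)
    fun t _ => mem_iUnion.2 (Bool.exists_bool.2 (hσ t).symm)
  refine ⟨ε, hε, fun p w hw => ?_⟩
  cases p with
  | zero => exact Or.inl fun t => absurd t.2.2 (by simp)
  | succ p =>
    have hball : ∀ t, affineSimplex (convex_stdSimplex ℝ _) w t ∈ Metric.ball (w 0) ε := fun t =>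
      affineSimplex_mem (convex_stdSimplex ℝ _) w t
        (convex_ball ((w 0 : Simplex n) : Fin n → ℝ) ε) fun i => hw i 0
    obtain ⟨b, hb⟩ := h (w 0) trivial
    cases b
    · exact Or.inr fun t => hb (hball t)
    · exact Or.inl fun t => hb (hball t)

theorem eventually_subdivide_eq_zero {σ : C(Simplex n, Z)} (hσ : σ ∈ simplicesIn (A ∪ B) n) :
    ∀ᶠ m in Filter.atTop,
      (∀ α : Cochain Z n, EqOn α 0 (simplicesIn A n ∪ simplicesIn B n) → subdivide m α σ = 0) ∧
      ∀ α : Cochain Z (n + 1), EqOn α 0 (simplicesIn A (n + 1) ∪ simplicesIn B (n + 1)) →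
        subdivideHomotopy (m + 1) α σ = subdivideHomotopy m α σ := by
  obtain ⟨ε, hε, hsmall⟩ := exists_forall_dist_lt_comp_mem hA hB hσ
  have hmesh : Filter.Tendsto (fun m : ℕ => ((n : ℝ) / (n + 1)) ^ m * 1) Filter.atTop (nhds 0) := by
    simpa using tendsto_pow_atTop_nhds_zero_of_lt_one (r := (n : ℝ) / (n + 1)) (by positivity)
      ((div_lt_one (by positivity)).2 (by linarith))
  filter_upwards [hmesh.eventually_lt_const hε] with m hm
  have hdist : ∀ x y : Simplex n, dist x y ≤ 1 := fun x y =>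
    (Metric.dist_le_diam_of_mem (bounded_stdSimplex _) x.2 y.2).trans diam_stdSimplex_le
  have hfine := TupleChain.subdivision_pow_single_mem_supported (convex_stdSimplex ℝ (Fin n))
    (N := n) (by lia) stdSimplex.vertex (fun _ _ => hdist _ _) m
  refine ⟨fun α hα => evaluate_eq_zero _ hα (Finsupp.supported_mono (fun w hw => ?_) hfine),
    fun α hα => ?_⟩
  · exact hsmall _ w fun i j => (hw i j).trans_lt hm
  · rw [subdivideHomotopy_succ_apply, add_eq_left]
    refine evaluate_eq_zero _ hα (TupleChain.map_mem_of_mem_supported _ (fun w hw => ?_) hfine)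
    refine Finsupp.supported_mono (fun u hu => ?_)
      (TupleChain.subdivisionHomotopy_single_mem_supported _ n w hw)
    exact hsmall _ u fun i j => (hu.2 i j).trans_lt hm

theorem exists_eqOn_coboundary_of_eqOn_zero {α : Cochain Z (n + 1)}
    (hα : IsCocycleOn (A ∪ B) α)
    (h₀ : EqOn α 0 (simplicesIn A (n + 1) ∪ simplicesIn B (n + 1))) :
    ∃ β : Cochain Z n, EqOn β 0 (simplicesIn A n ∪ simplicesIn B n) ∧
      EqOn α (coboundary β) (simplicesIn (A ∪ B) (n + 1)) := by
  have hstab : ∀ σ : C(Simplex n, Z), ∃ m, σ ∈ simplicesIn (A ∪ B) n →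
      ∀ M ≥ m, subdivideHomotopy M α σ = subdivideHomotopy m α σ := fun σ => by
    by_cases hσ : σ ∈ simplicesIn (A ∪ B) n
    · obtain ⟨m, hm⟩ := Filter.eventually_atTop.1 (eventually_subdivide_eq_zero hA hB hσ)
      refine ⟨m, fun _ M hM => ?_⟩
      induction M, hM using Nat.le_induction with
      | base => rfl
      | succ M hM ih => exact ((hm M hM).2 α h₀).trans ih
    · exact ⟨0, fun h => absurd h hσ⟩
  choose m hm using hstab
  refine ⟨fun σ => subdivideHomotopy (m σ) α σ, ?_, fun τ hτ => ?_⟩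
  · rw [eqOn_union] at h₀ ⊢
    exact ⟨fun σ hσ => subdivideHomotopy_eqOn_zero h₀.1 (m σ) hσ,
      fun σ hσ => subdivideHomotopy_eqOn_zero h₀.2 (m σ) hσ⟩
  obtain ⟨k, hk⟩ := Filter.eventually_atTop.1 (eventually_subdivide_eq_zero hA hB hτ)
  let M := k ⊔ Finset.univ.sup fun i : Fin (n + 1) => m (τ.comp (simplexMap i.succAbove))
  have hface : coboundary (fun σ => subdivideHomotopy (m σ) α σ) τ =
      coboundary (subdivideHomotopy M α) τ := by
    simp only [coboundary_apply]
    exact Finset.sum_congr rfl fun i _ => (hm _ (comp_mem_simplicesIn hτ _) M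
      ((Finset.le_sup (f := fun i : Fin (n + 1) => m (τ.comp (simplexMap i.succAbove)))
        (Finset.mem_univ i)).trans le_sup_right)).symm
  have hτM := congrFun (coboundary_subdivideHomotopy M α) τ
  rw [Pi.add_apply, Pi.add_apply, subdivideHomotopy_eqOn_zero hα M hτ,
    (hk M le_sup_left).1 α h₀, add_zero, Pi.zero_apply, zero_add] at hτM
  rw [hface, hτM]

end SmallSimplices

end Cochains

section HomotopyInvariance

open Set
open Finsupp (single)

variable {X Z : Type*} [TopologicalSpace X] [TopologicalSpace Z] {n : ℕ}

/-- The prism `Δ × [0, 1]` over the standard simplex with `n` vertices. -/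
abbrev prism (n : ℕ) : Set ((Fin n → ℝ) × ℝ) := stdSimplex ℝ (Fin n) ×ˢ Icc (0 : ℝ) 1

theorem convex_prism (n : ℕ) : Convex ℝ (prism n) := (convex_stdSimplex ℝ _).prod (convex_Icc 0 1)

/-- The inclusion of the standard simplex into the prism at height `s`. -/
def prismSection (n : ℕ) (s : unitInterval) : C(Simplex n, prism n) where
  toFun t := ⟨(t.1, s.1), t.2, s.2⟩

theorem preservesAffineSimplices_prismSection (n : ℕ) (s : unitInterval) :
    PreservesAffineSimplices (convex_stdSimplex ℝ _) (convex_prism n) (prismSection n s) := by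
  intro p w
  ext1 t
  refine Subtype.ext (Prod.ext ?_ ?_)
  · rw [coe_affineSimplex, Prod.fst_sum]
    exact coe_affineSimplex (convex_stdSimplex ℝ _) w t
  · rw [coe_affineSimplex, Prod.snd_sum]
    change s.1 = ∑ i, t.1 i • s.1
    rw [← Finset.sum_smul, t.2.2, one_smul]

/-- The map of prisms induced by a map of their bases. -/
def prismMap {p q : ℕ} (h : C(Simplex p, Simplex q)) : C(prism p, prism q) where
  toFun t := ⟨((h ⟨t.1.1, t.2.1⟩).1, t.1.2), (h ⟨t.1.1, t.2.1⟩).2, t.2.2⟩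

theorem PreservesAffineSimplices.prismMap {p q : ℕ} {h : C(Simplex p, Simplex q)}
    (hh : PreservesAffineSimplices (convex_stdSimplex ℝ _) (convex_stdSimplex ℝ _) h) :
    PreservesAffineSimplices (convex_prism p) (convex_prism q) (prismMap h) := by
  intro m w
  ext1 t
  refine Subtype.ext (Prod.ext ?_ ?_)
  · have hbase : (⟨(affineSimplex (convex_prism p) w t).1.1, (affineSimplex _ w t).2.1⟩ : Simplex p)
        = affineSimplex (convex_stdSimplex ℝ _) (fun i => ⟨(w i).1.1, (w i).2.1⟩) t :=
      Subtype.ext (Prod.fst_sum (s := .univ) (f := fun i => t.1 i • (w i).1))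
    rw [coe_affineSimplex, Prod.fst_sum]
    refine (congrArg (fun x => (h x).1) hbase).trans ?_
    exact congrArg Subtype.val (DFunLike.congr_fun (hh m _) t)
  · rw [coe_affineSimplex, Prod.snd_sum]
    exact Prod.snd_sum (s := .univ) (f := fun i => t.1 i • (w i).1)

/-- The singular prism traced out by a singular simplex under a homotopy. -/
def homotopyPrism {f g : C(X, Z)} (F : f.Homotopy g) (σ : C(Simplex n, X)) : C(prism n, Z) where
  toFun t := F (⟨t.1.2, t.2.2⟩, σ ⟨t.1.1, t.2.1⟩)

/-- The chain homotopy between the bottom and the top of a prism. -/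
noncomputable def prismOperator (q n : ℕ) :
    TupleChain (Simplex q) n →ₗ[ZMod 2] TupleChain (prism q) (n + 1) :=
  TupleChain.homotopyOperator (fun _ v => prismSection q 0 (v 0))
    (TupleChain.map (prismSection q 0)) (TupleChain.map (prismSection q 1)) n

theorem boundary_prismOperator (q n : ℕ) (c : TupleChain (Simplex q) (n + 1)) :
    TupleChain.boundary (n + 1) (prismOperator q (n + 1) c) +
        prismOperator q n (TupleChain.boundary n c) =
      TupleChain.map (prismSection q 0) _ c + TupleChain.map (prismSection q 1) _ c := by
  refine TupleChain.boundary_homotopyOperator _ (fun c => ?_)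
    (fun n c => (TupleChain.map_boundary _ n c).symm)
    (fun n c => (TupleChain.map_boundary _ n c).symm) n c
  refine TupleChain.linearMap_apply_eq (fun v => ?_) c
  rw [TupleChain.map_single, TupleChain.map_single, Subsingleton.elim (_ ∘ v)]

theorem map_prismOperator {p q : ℕ} (h : C(Simplex p, Simplex q)) (n : ℕ)
    (c : TupleChain (Simplex p) n) :
    TupleChain.map (prismMap h) (n + 1) (prismOperator p n c) =
      prismOperator q n (TupleChain.map h n c) := by
  have hsection (s : unitInterval) (n : ℕ) (c : TupleChain (Simplex p) n) :
      TupleChain.map (prismMap h) n (TupleChain.map (prismSection p s) n c) =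
        TupleChain.map (prismSection q s) n (TupleChain.map h n c) := by
    refine TupleChain.linearMap_apply_eq
      (f := TupleChain.map (prismMap h) n ∘ₗ TupleChain.map (prismSection p s) n)
      (g := TupleChain.map (prismSection q s) n ∘ₗ TupleChain.map h n) (fun v => ?_) c
    simp only [LinearMap.comp_apply, TupleChain.map_single]
    rfl
  exact TupleChain.map_homotopyOperator _ _ _ (fun _ _ => rfl) (hsection 0) (hsection 1) n c

/-- The cochain homotopy induced by a homotopy of maps. -/
noncomputable def pullbackHomotopy {f g : C(X, Z)} (F : f.Homotopy g) (α : Cochain Z (n + 1)) :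
    Cochain X n := fun σ =>
  evaluate (convex_prism n) (homotopyPrism F σ) α (prismOperator n n (single stdSimplex.vertex 1))

theorem coboundary_pullbackHomotopy_apply {f g : C(X, Z)} (F : f.Homotopy g)
    (α : Cochain Z (n + 1)) (σ : C(Simplex (n + 1), X)) :
    coboundary (pullbackHomotopy F α) σ = evaluate (convex_prism _) (homotopyPrism F σ) α
      (prismOperator (n + 1) n (TupleChain.boundary n (single stdSimplex.vertex 1))) := by
  rw [coboundary_apply, TupleChain.boundary_single, map_sum, map_sum]
  refine Finset.sum_congr rfl fun i _ => ?_
  rw [← simplexMap_comp_vertex, ← TupleChain.map_single, ← map_prismOperator,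
    evaluate_map (preservesAffineSimplices_simplexMap _).prismMap]
  rfl

theorem pullbackHomotopy_coboundary_add {f g : C(X, Z)} (F : f.Homotopy g)
    (α : Cochain Z (n + 1)) :
    pullbackHomotopy F (coboundary α) + coboundary (pullbackHomotopy F α) =
      pullback f α + pullback g α := by
  ext σ
  have hzero : (homotopyPrism F σ).comp (prismSection _ 0) = f.comp σ :=
    ContinuousMap.ext fun t => F.map_zero_left _
  have hone : (homotopyPrism F σ).comp (prismSection _ 1) = g.comp σ :=
    ContinuousMap.ext fun t => F.map_one_left _
  rw [Pi.add_apply, coboundary_pullbackHomotopy_apply, pullbackHomotopy, ← evaluate_boundary,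
    ← map_add, boundary_prismOperator, map_add,
    evaluate_map (preservesAffineSimplices_prismSection _ _),
    evaluate_map (preservesAffineSimplices_prismSection _ _), hzero, hone,
    evaluate_single_vertex, evaluate_single_vertex]
  rfl

theorem isCoboundaryOn_pullback_add_pullback {V : Set X} {W : Set Z} {f g : C(X, Z)}
    (F : f.Homotopy g) (hF : ∀ x ∈ V, ∀ t, F (t, x) ∈ W) {α : Cochain Z n}
    (hα : IsCocycleOn W α) : IsCoboundaryOn V (pullback f α + pullback g α) := by
  cases n with
  | zero =>
    intro σ _
    rw [Pi.add_apply, pullback_apply, pullback_apply,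
      Simplex.eq_of_zero (f.comp σ) (g.comp σ), ZModModule.add_self, Pi.zero_apply]
  | succ n =>
    refine ⟨pullbackHomotopy F α, fun σ hσ => ?_⟩
    rw [← pullbackHomotopy_coboundary_add F, Pi.add_apply, pullbackHomotopy,
      evaluate_eq_zero_of_forall_mem _ (fun t => hF _ (hσ _) _) hα, zero_add]

section Subspaces

/-- The inclusion of a subspace as a bundled continuous map. -/
def inclusion (V : Set Z) : C(V, Z) := ⟨Subtype.val, continuous_subtype_val⟩

theorem exists_pullback_inclusion_eq {V : Set Z} (α : Cochain V n) :
    ∃ α' : Cochain Z n, pullback (inclusion V) α' = α :=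
  have hinj : Function.Injective fun σ : C(Simplex n, V) => (inclusion V).comp σ := fun _ _ h =>
    ContinuousMap.ext fun t => Subtype.ext (DFunLike.congr_fun h t)
  ⟨Function.extend _ α 0, Function.extend_comp hinj α 0⟩

/-- The corestriction of a singular simplex to a subspace containing its image. -/
def liftSimplex {V : Set Z} {σ : C(Simplex n, Z)} (h : σ ∈ simplicesIn V n) : C(Simplex n, V) :=
  ⟨fun t => ⟨σ t, h t⟩, by fun_prop⟩

theorem isCocycleOn_univ_pullback_inclusion {V : Set Z} {α : Cochain Z n} :
    IsCocycleOn univ (pullback (inclusion V) α) ↔ IsCocycleOn V α := by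
  refine ⟨fun h σ hσ => ?_, fun h => h.pullback fun x _ => x.2⟩
  rw [IsCocycleOn, coboundary_pullback] at h
  exact h (x := liftSimplex hσ) fun _ => trivial

theorem isCoboundaryOn_univ_pullback_inclusion {V : Set Z} {α : Cochain Z n} :
    IsCoboundaryOn univ (pullback (inclusion V) α) ↔ IsCoboundaryOn V α := by
  refine ⟨fun h => ?_, fun h => h.pullback fun x _ => x.2⟩
  cases n with
  | zero => exact fun σ hσ => h (x := liftSimplex hσ) fun _ => trivial
  | succ n =>
    obtain ⟨β, hβ⟩ := h
    obtain ⟨β, rfl⟩ := exists_pullback_inclusion_eq β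
    rw [coboundary_pullback] at hβ
    exact ⟨β, fun σ hσ => hβ (x := liftSimplex hσ) fun _ => trivial⟩

theorem isAcyclicOn_univ_subtype {V : Set Z} : IsAcyclicOn n (univ : Set V) ↔ IsAcyclicOn n V := by
  refine ⟨fun h α hα => ?_, fun h α hα => ?_⟩
  · exact isCoboundaryOn_univ_pullback_inclusion.1
      (h _ (isCocycleOn_univ_pullback_inclusion.2 hα))
  · obtain ⟨α, rfl⟩ := exists_pullback_inclusion_eq α
    exact isCoboundaryOn_univ_pullback_inclusion.2
      (h _ (isCocycleOn_univ_pullback_inclusion.1 hα))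

end Subspaces

theorem coboundary_const (κ : ZMod 2) :
    coboundary (Function.const _ κ : Cochain X n) = Function.const _ ((n + 1) • κ) := by
  ext σ
  simp [coboundary_apply]

theorem isCoboundaryOn_const [Nonempty X] {κ : ZMod 2}
    (h : IsCocycleOn univ (Function.const _ κ : Cochain X n)) :
    IsCoboundaryOn univ (Function.const _ κ : Cochain X n) := by
  obtain ⟨x⟩ := ‹Nonempty X›
  have hκ : (n + 1) • κ = 0 := by
    have hx := h (x := ContinuousMap.const _ x) fun _ => trivial
    rwa [coboundary_const] at hx
  cases n with
  | zero => exact fun σ _ => by simpa using hκ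
  | succ n =>
    refine ⟨Function.const _ κ, ?_⟩
    rw [coboundary_const, CharTwo.add_eq_zero.1 ((succ_nsmul κ (n + 1)).symm.trans hκ)]
    exact eqOn_refl _ _

theorem isAcyclicOn_of_contractibleSpace (n : ℕ) (V : Set Z) [ContractibleSpace V] :
    IsAcyclicOn n V := by
  rw [← isAcyclicOn_univ_subtype]
  intro α hα
  obtain ⟨c, ⟨F⟩⟩ := id_nullhomotopic V
  have hsum : IsCoboundaryOn univ (α + pullback (ContinuousMap.const V c) α) :=
    isCoboundaryOn_pullback_add_pullback (W := univ) F (fun _ _ _ => trivial) hα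
  have : Nonempty V := ⟨c⟩
  exact hsum.of_add (isCoboundaryOn_const (κ := α (ContinuousMap.const _ c))
    (hα.pullback (f := ContinuousMap.const V c) fun _ _ => trivial))

end HomotopyInvariance

section Gluing

open Set

variable {Z : Type*} [TopologicalSpace Z] {n : ℕ} {A B : Set Z} (hA : IsOpen A) (hB : IsOpen B)

include hA hB

theorem exists_isCocycleOn_union_eqOn {α : Cochain Z n} (hαA : IsCocycleOn A α)
    (hαB : IsCocycleOn B α) :
    ∃ α' : Cochain Z n, IsCocycleOn (A ∪ B) α' ∧
      EqOn α' α (simplicesIn A n ∪ simplicesIn B n) := by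
  obtain ⟨β, hβ, hαβ⟩ := exists_eqOn_coboundary_of_eqOn_zero hA hB
    (isCocycleOn_coboundary _ α) (EqOn.union hαA hαB)
  refine ⟨α + β, fun σ hσ => ?_, fun σ hσ => ?_⟩
  · rw [map_add, Pi.add_apply, ← hαβ hσ, ZModModule.add_self, Pi.zero_apply]
  · rw [Pi.add_apply, hβ hσ, Pi.zero_apply, add_zero]

omit hA hB in
theorem IsCoboundaryOn.exists_coboundary_eq_zero {V : Set Z} {α : Cochain Z n}
    (h : IsCoboundaryOn V α) :
    ∃ γ : Cochain Z n, coboundary γ = 0 ∧ EqOn α γ (simplicesIn V n) := by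
  cases n with
  | zero => exact ⟨0, map_zero _, h⟩
  | succ n => exact h.imp' coboundary fun β hβ => ⟨coboundary_coboundary β, hβ⟩

open Classical in
theorem IsCocycleOn.isCoboundaryOn_union {α : Cochain Z (n + 1)} (hα : IsCocycleOn (A ∪ B) α)
    {βA βB : Cochain Z n} (hβA : EqOn α (coboundary βA) (simplicesIn A (n + 1)))
    (hβB : EqOn α (coboundary βB) (simplicesIn B (n + 1)))
    (hβ : IsCoboundaryOn (A ∩ B) (βA + βB)) : IsCoboundaryOn (A ∪ B) α := by
  -- Correcting `βB` by a cocycle makes the two primitives agree on `A ∩ B`, so that they glue.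
  obtain ⟨γ, hγ, hβγ⟩ := hβ.exists_coboundary_eq_zero
  let β : Cochain Z n := (simplicesIn A n).piecewise βA (βB + γ)
  have hA' : EqOn β βA (simplicesIn A n) := piecewise_eqOn _ _ _
  have hB' : EqOn β (βB + γ) (simplicesIn B n) := fun σ hσ => by
    by_cases hσA : σ ∈ simplicesIn A n
    · rw [hA' hσA, Pi.add_apply, ← hβγ fun t => ⟨hσA t, hσ t⟩, Pi.add_apply,
        add_left_comm, ZModModule.add_self, add_zero]
    · exact piecewise_eq_of_notMem _ _ _ hσA
  have hsmall : EqOn (α + coboundary β) 0 (simplicesIn A (n + 1) ∪ simplicesIn B (n + 1)) := by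
    rintro σ (hσ | hσ)
    · rw [Pi.add_apply, eqOn_coboundary hA' hσ, hβA hσ, ZModModule.add_self, Pi.zero_apply]
    · rw [Pi.add_apply, eqOn_coboundary hB' hσ, map_add, hγ, add_zero, hβB hσ,
        ZModModule.add_self, Pi.zero_apply]
  obtain ⟨η, -, hη⟩ := exists_eqOn_coboundary_of_eqOn_zero hA hB
    (hα.add (isCocycleOn_coboundary _ β)) hsmall
  exact IsCoboundaryOn.of_add ⟨η, hη⟩ (isCoboundaryOn_coboundary _ β)

theorem IsAcyclicOn.union (hnA : IsAcyclicOn (n + 1) A) (hnB : IsAcyclicOn (n + 1) B)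
    (hn : IsAcyclicOn n (A ∩ B)) : IsAcyclicOn (n + 1) (A ∪ B) := by
  intro α hα
  obtain ⟨βA, hβA⟩ := hnA α (hα.mono subset_union_left)
  obtain ⟨βB, hβB⟩ := hnB α (hα.mono subset_union_right)
  refine hα.isCoboundaryOn_union hA hB hβA hβB (hn _ fun σ hσ => ?_)
  rw [map_add, Pi.add_apply, ← hβA (simplicesIn_mono inter_subset_left hσ),
    ← hβB (simplicesIn_mono inter_subset_right hσ), ZModModule.add_self, Pi.zero_apply]

end Gluing

section CupProduct

open Set

variable {X Z : Type*} [TopologicalSpace X] [TopologicalSpace Z] {p q r : ℕ}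

/-- The indices of the front `p`-face of an `r`-simplex. -/
def frontFace (h : p ≤ r) : Fin (p + 1) → Fin (r + 1) := Fin.castLE (by omega)

/-- The indices of the back `q`-face of an `r`-simplex, where `p + q = r`. -/
def backFace (h : p + q = r) : Fin (q + 1) → Fin (r + 1) := fun i => ⟨p + i, by omega⟩

/-- The Alexander–Whitney cup product. Since cochains are graded by the number of vertices, the
product of classes of degrees `p` and `q` goes from grades `p + 1` and `q + 1` to `p + q + 1`. -/
noncomputable def cup (h : p + q = r) (α : Cochain Z (p + 1)) (β : Cochain Z (q + 1)) :
    Cochain Z (r + 1) := fun σ =>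
  α (σ.comp (simplexMap (frontFace (Nat.le.intro h)))) * β (σ.comp (simplexMap (backFace h)))

theorem add_cup (h : p + q = r) (α α' : Cochain Z (p + 1)) (β : Cochain Z (q + 1)) :
    cup h (α + α') β = cup h α β + cup h α' β :=
  funext fun _ => add_mul _ _ _

theorem cup_add (h : p + q = r) (α : Cochain Z (p + 1)) (β β' : Cochain Z (q + 1)) :
    cup h α (β + β') = cup h α β + cup h α β' :=
  funext fun _ => mul_add _ _ _

theorem pullback_cup (h : p + q = r) (f : C(X, Z)) (α : Cochain Z (p + 1))
    (β : Cochain Z (q + 1)) : pullback f (cup h α β) = cup h (pullback f α) (pullback f β) :=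
  rfl

theorem cup_assoc {s pq qs : ℕ} (h₁ : p + q = pq) (h₂ : pq + s = r) (h₃ : q + s = qs)
    (h₄ : p + qs = r) (α : Cochain Z (p + 1)) (β : Cochain Z (q + 1)) (γ : Cochain Z (s + 1)) :
    cup h₂ (cup h₁ α β) γ = cup h₄ α (cup h₃ β γ) := by
  have hmiddle : frontFace (Nat.le.intro h₂) ∘ backFace h₁ =
      backFace h₄ ∘ frontFace (Nat.le.intro h₃) := rfl
  have hback : backFace h₂ = backFace h₄ ∘ backFace h₃ := by
    ext j
    simp only [backFace, Function.comp_apply]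
    omega
  ext σ
  simp only [cup, ContinuousMap.comp_assoc, simplexMap_comp, mul_assoc, hmiddle, hback]
  rfl

theorem cup_one (α : Cochain Z (p + 1)) : cup p.add_zero α 1 = α := by
  have hfront : frontFace (le_refl p) = id := rfl
  ext σ
  simp only [cup, Pi.one_apply, mul_one, hfront, simplexMap_id, ContinuousMap.comp_id]

theorem one_cup (α : Cochain Z (p + 1)) : cup p.zero_add 1 α = α := by
  have hback : backFace p.zero_add = id := by
    ext j
    exact Nat.zero_add j
  ext σ
  simp only [cup, Pi.one_apply, one_mul, hback, simplexMap_id, ContinuousMap.comp_id]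

section Leibniz

/-- `Fin.succAbove` indexed by the natural numbers, which allows a sum over the faces of a simplex
to be cut at an arbitrary place. -/
def skip {n : ℕ} (k : ℕ) (j : Fin n) : Fin (n + 1) :=
  ⟨if (j : ℕ) < k then j else j + 1, by split_ifs <;> omega⟩

theorem coboundary_apply_eq_sum_range {n : ℕ} (α : Cochain Z n) (σ : C(Simplex (n + 1), Z)) :
    coboundary α σ = ∑ k ∈ Finset.range (n + 1), α (σ.comp (simplexMap (skip k))) := by
  rw [← Fin.sum_univ_eq_sum_range (fun k => α (σ.comp (simplexMap (skip k)))), coboundary_apply]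
  refine Finset.sum_congr rfl fun i _ => ?_
  have hskip : i.succAbove = skip (i : ℕ) := by
    ext j
    simp only [skip, Fin.succAbove, Fin.lt_def, Fin.val_castSucc]
    split_ifs <;> rfl
  rw [hskip]

theorem skip_comp_frontFace_of_lt {k : ℕ} (h : p ≤ r) (hk : p < k) :
    skip k ∘ frontFace h = frontFace (Nat.le_succ_of_le h) := by
  ext j
  simp only [skip, frontFace, Function.comp_apply, Fin.val_castLE]
  grind

theorem skip_comp_backFace_of_le {k : ℕ} (h : p + q = r) (h' : p + 1 + q = r + 1) (hk : k ≤ p) :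
    skip k ∘ backFace h = backFace h' := by
  ext j
  simp only [skip, backFace, Function.comp_apply]
  grind

theorem skip_comp_backFace_add {k : ℕ} (h : p + q = r) (h' : p + (q + 1) = r + 1) :
    skip (p + k) ∘ backFace h = backFace h' ∘ skip k := by
  ext j
  simp only [skip, backFace, Function.comp_apply]
  grind

theorem cup_apply_skip_of_le {k : ℕ} (hk : k ≤ p) (h : p + q = r) (h' : p + 1 + q = r + 1)
    (α : Cochain Z (p + 1)) (β : Cochain Z (q + 1)) (σ : C(Simplex (r + 2), Z)) :
    cup h α β (σ.comp (simplexMap (skip k))) =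
      α ((σ.comp (simplexMap (frontFace (Nat.le.intro h')))).comp (simplexMap (skip k))) *
        β (σ.comp (simplexMap (backFace h'))) := by
  simp only [cup, ContinuousMap.comp_assoc, simplexMap_comp, skip_comp_backFace_of_le h h' hk]
  rfl

theorem cup_apply_skip_of_lt {k : ℕ} (hk : 0 < k) (h : p + q = r) (h' : p + (q + 1) = r + 1)
    (α : Cochain Z (p + 1)) (β : Cochain Z (q + 1)) (σ : C(Simplex (r + 2), Z)) :
    cup h α β (σ.comp (simplexMap (skip (p + k)))) =
      α (σ.comp (simplexMap (frontFace (Nat.le.intro h')))) *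
        β ((σ.comp (simplexMap (backFace h'))).comp (simplexMap (skip k))) := by
  simp only [cup, ContinuousMap.comp_assoc, simplexMap_comp, skip_comp_backFace_add h h',
    skip_comp_frontFace_of_lt (Nat.le.intro h) (Nat.lt_add_of_pos_right hk)]

theorem coboundary_cup (h : p + q = r) (h₁ : p + 1 + q = r + 1) (h₂ : p + (q + 1) = r + 1)
    (α : Cochain Z (p + 1)) (β : Cochain Z (q + 1)) :
    coboundary (cup h α β) = cup h₁ (coboundary α) β + cup h₂ α (coboundary β) := by
  ext σ
  let φ (k : ℕ) : ZMod 2 :=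
    α ((σ.comp (simplexMap (frontFace (Nat.le.intro h₁)))).comp (simplexMap (skip k))) *
      β (σ.comp (simplexMap (backFace h₁)))
  let ψ (k : ℕ) : ZMod 2 :=
    α (σ.comp (simplexMap (frontFace (Nat.le.intro h₂)))) *
      β ((σ.comp (simplexMap (backFace h₂))).comp (simplexMap (skip k)))
  -- The last face of the front half and the first face of the back half give the same term.
  have hcancel : φ (p + 1) = ψ 0 := by
    have hfront : frontFace (Nat.le.intro h₁) ∘ skip (p + 1) = frontFace (Nat.le.intro h₂) := by
      ext j
      exact if_pos j.2
    simp only [φ, ψ, ContinuousMap.comp_assoc, simplexMap_comp, hfront,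
      ← skip_comp_backFace_add h h₂, Nat.add_zero, skip_comp_backFace_of_le h h₁ le_rfl]
  have hleft : cup h₁ (coboundary α) β σ = ∑ k ∈ Finset.range (p + 1), φ k + φ (p + 1) := by
    rw [cup, coboundary_apply_eq_sum_range, Finset.sum_mul, Finset.sum_range_succ]
  have hright : cup h₂ α (coboundary β) σ = ∑ k ∈ Finset.range (q + 1), ψ (k + 1) + ψ 0 := by
    rw [cup, coboundary_apply_eq_sum_range, Finset.mul_sum, Finset.sum_range_succ']
  have hsum : coboundary (cup h α β) σ =
      ∑ k ∈ Finset.range (p + 1), φ k + ∑ k ∈ Finset.range (q + 1), ψ (k + 1) := by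
    have hrange : Finset.range (r + 2) = Finset.range (p + 1 + (q + 1)) := congrArg _ (by omega)
    rw [coboundary_apply_eq_sum_range, hrange, Finset.sum_range_add]
    congr 1
    · exact Finset.sum_congr rfl fun k hk =>
        cup_apply_skip_of_le (Nat.lt_succ_iff.1 (Finset.mem_range.1 hk)) h h₁ α β σ
    · refine Finset.sum_congr rfl fun k _ => ?_
      rw [show p + 1 + k = p + (k + 1) by ac_rfl]
      exact cup_apply_skip_of_lt k.succ_pos h h₂ α β σ
  rw [Pi.add_apply, hsum, hleft, hright, hcancel, add_add_add_comm, ZModModule.add_self, add_zero]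

end Leibniz

variable {V : Set Z}

theorem eqOn_cup (h : p + q = r) {α α' : Cochain Z (p + 1)} {β β' : Cochain Z (q + 1)}
    (hα : EqOn α α' (simplicesIn V _)) (hβ : EqOn β β' (simplicesIn V _)) :
    EqOn (cup h α β) (cup h α' β') (simplicesIn V _) := fun σ hσ => by
  rw [cup, cup, hα (comp_mem_simplicesIn hσ _), hβ (comp_mem_simplicesIn hσ _)]

theorem zero_cup (h : p + q = r) (β : Cochain Z (q + 1)) : cup h (0 : Cochain Z (p + 1)) β = 0 :=
  funext fun _ => zero_mul _

theorem cup_zero (h : p + q = r) (α : Cochain Z (p + 1)) : cup h α (0 : Cochain Z (q + 1)) = 0 :=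
  funext fun _ => mul_zero _

theorem eqOn_coboundary_cup_left (h : p + q = r) (h₁ : p + 1 + q = r + 1) (α : Cochain Z (p + 1))
    {β : Cochain Z (q + 1)} (hβ : IsCocycleOn V β) :
    EqOn (coboundary (cup h α β)) (cup h₁ (coboundary α) β) (simplicesIn V _) := fun σ hσ => by
  rw [coboundary_cup h h₁ (by omega), Pi.add_apply, eqOn_cup _ (eqOn_refl _ _) hβ hσ, cup_zero,
    Pi.zero_apply, add_zero]

theorem eqOn_coboundary_cup_right (h : p + q = r) (h₂ : p + (q + 1) = r + 1)
    {α : Cochain Z (p + 1)} (hα : IsCocycleOn V α) (β : Cochain Z (q + 1)) :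
    EqOn (coboundary (cup h α β)) (cup h₂ α (coboundary β)) (simplicesIn V _) := fun σ hσ => by
  rw [coboundary_cup h (by omega) h₂, Pi.add_apply, eqOn_cup _ hα (eqOn_refl _ _) hσ, zero_cup,
    Pi.zero_apply, zero_add]

theorem IsCocycleOn.cup (h : p + q = r) {α : Cochain Z (p + 1)} {β : Cochain Z (q + 1)}
    (hα : IsCocycleOn V α) (hβ : IsCocycleOn V β) : IsCocycleOn V (cup h α β) := fun σ hσ => by
  rw [eqOn_coboundary_cup_left h (by omega) α hβ hσ, eqOn_cup _ hα (eqOn_refl _ _) hσ, zero_cup]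

theorem IsCoboundaryOn.cup_left (h : p + 1 + q = r) {α : Cochain Z (p + 2)}
    {β : Cochain Z (q + 1)} (hα : IsCoboundaryOn V α) (hβ : IsCocycleOn V β) :
    IsCoboundaryOn V (cup h α β) := by
  obtain ⟨η, hη⟩ := hα
  obtain rfl : r = p + q + 1 := by omega
  exact ⟨CoveringType.cup rfl η β, (eqOn_cup h hη (eqOn_refl _ _)).trans
    (eqOn_coboundary_cup_left rfl h η hβ).symm⟩

theorem IsCoboundaryOn.cup_right (h : p + (q + 1) = r) {α : Cochain Z (p + 1)}
    {β : Cochain Z (q + 2)} (hα : IsCocycleOn V α) (hβ : IsCoboundaryOn V β) :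
    IsCoboundaryOn V (cup h α β) := by
  obtain ⟨η, hη⟩ := hβ
  obtain rfl : r = p + q + 1 := by omega
  exact ⟨CoveringType.cup rfl α η, (eqOn_cup h (eqOn_refl _ _) hη).trans
    (eqOn_coboundary_cup_right rfl h hα η).symm⟩

theorem isCoboundaryOn_union_cup {A B : Set Z} (hA : IsOpen A) (hB : IsOpen B)
    (h : p + 1 + (q + 1) = r) {α : Cochain Z (p + 2)} {β : Cochain Z (q + 2)}
    (hα : IsCocycleOn (A ∪ B) α) (hβ : IsCocycleOn (A ∪ B) β) (hαA : IsCoboundaryOn A α)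
    (hβB : IsCoboundaryOn B β) : IsCoboundaryOn (A ∪ B) (cup h α β) := by
  obtain ⟨η, hη⟩ := hαA
  obtain ⟨ζ, hζ⟩ := hβB
  have hα' : IsCocycleOn (A ∪ B) (α + coboundary η) := hα.add (isCocycleOn_coboundary _ η)
  have hβ' : IsCocycleOn (A ∪ B) (β + coboundary ζ) := hβ.add (isCocycleOn_coboundary _ ζ)
  have hα₀ : EqOn (α + coboundary η) 0 (simplicesIn A _) := fun σ hσ => by
    rw [Pi.add_apply, hη hσ, ZModModule.add_self, Pi.zero_apply]
  have hβ₀ : EqOn (β + coboundary ζ) 0 (simplicesIn B _) := fun σ hσ => by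
    rw [Pi.add_apply, hζ hσ, ZModModule.add_self, Pi.zero_apply]
  have hsmall : EqOn (cup h (α + coboundary η) (β + coboundary ζ)) 0
      (simplicesIn A _ ∪ simplicesIn B _) := by
    rintro σ (hσ | hσ)
    · rw [eqOn_cup h hα₀ (eqOn_refl _ _) hσ, zero_cup]
    · rw [eqOn_cup h (eqOn_refl _ _) hβ₀ hσ, cup_zero]
  obtain ⟨θ, -, hθ⟩ := exists_eqOn_coboundary_of_eqOn_zero hA hB (hα'.cup h hβ') hsmall
  have hcup : IsCoboundaryOn (A ∪ B) (cup h (α + coboundary η) (β + coboundary ζ)) := ⟨θ, hθ⟩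
  rw [cup_add] at hcup
  have hcup' := hcup.of_add (.cup_right h hα' (isCoboundaryOn_coboundary _ ζ))
  rw [add_cup] at hcup'
  exact hcup'.of_add (.cup_left h (isCoboundaryOn_coboundary _ η) hβ)

end CupProduct

section GoodCovers

open Set

variable {Z : Type*} [TopologicalSpace Z] {ι : Type*}

theorem isAcyclicOn_succ_empty (n : ℕ) : IsAcyclicOn (n + 1) (∅ : Set Z) :=
  fun _ _ => ⟨0, fun _ hσ => (hσ (stdSimplex.vertex 0)).elim⟩

theorem isAcyclicOn_zero {V : Set Z} (hV : V.Nonempty) : IsAcyclicOn 0 V := by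
  intro α hα σ _
  obtain ⟨z, hz⟩ := hV
  have h := hα (x := ContinuousMap.const _ z) fun _ => hz
  rw [coboundary_apply, Fin.sum_univ_one] at h
  rw [Simplex.eq_of_zero σ, h, Pi.zero_apply, Pi.zero_apply]

/-- Finite families of open sets whose nonempty intersections are acyclic: the cohomological form
of a good cover of the union. -/
structure IsAcyclicFamily (s : Finset ι) (U : ι → Set Z) : Prop where
  isOpen : ∀ i ∈ s, IsOpen (U i)
  isAcyclicOn : ∀ T ⊆ s, T.Nonempty → (⋂ i ∈ T, U i).Nonempty →
    ∀ n, IsAcyclicOn n (⋂ i ∈ T, U i)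

namespace IsAcyclicFamily

theorem mono {s t : Finset ι} {U : ι → Set Z} (h : IsAcyclicFamily s U) (hts : t ⊆ s) :
    IsAcyclicFamily t U :=
  ⟨fun i hi => h.isOpen i (hts hi), fun T hT => h.isAcyclicOn T (hT.trans hts)⟩

theorem isOpen_biUnion {s : Finset ι} {U : ι → Set Z} (h : IsAcyclicFamily s U) :
    IsOpen (⋃ i ∈ s, U i) :=
  _root_.isOpen_biUnion h.isOpen

theorem isAcyclicOn_member {s : Finset ι} {U : ι → Set Z} (h : IsAcyclicFamily s U) {m : ι}
    (hm : m ∈ s) (hne : (U m).Nonempty) (n : ℕ) : IsAcyclicOn n (U m) := by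
  have := h.isAcyclicOn {m} (Finset.singleton_subset_iff.2 hm) (Finset.singleton_nonempty m)
  rw [Finset.set_biInter_singleton] at this
  exact this hne n

omit [TopologicalSpace Z] in
theorem biInter_inter_eq [DecidableEq ι] (m : ι) {T : Finset ι} (hT : T.Nonempty) (U : ι → Set Z) :
    ⋂ i ∈ T, (U m ∩ U i) = ⋂ i ∈ insert m T, U i := by
  rw [Finset.set_biInter_insert]
  exact inter_biInter (Finset.coe_nonempty.2 hT) U (U m)

theorem link [DecidableEq ι] {m : ι} {s : Finset ι} {U : ι → Set Z}
    (h : IsAcyclicFamily (insert m s) U) :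
    IsAcyclicFamily s fun i => U m ∩ U i := by
  refine ⟨fun i hi => (h.isOpen m (Finset.mem_insert_self m s)).inter
    (h.isOpen i (Finset.mem_insert_of_mem hi)), fun T hT hne => ?_⟩
  rw [biInter_inter_eq m hne]
  exact h.isAcyclicOn _ (Finset.insert_subset_insert m hT) (Finset.insert_nonempty m T)

theorem isAcyclicOn_biUnion_insert [DecidableEq ι] {m : ι} {s : Finset ι} {U : ι → Set Z}
    {n : ℕ} (h : IsAcyclicFamily (insert m s) U) (hs : IsAcyclicOn (n + 1) (⋃ i ∈ s, U i))
    (hlink : IsAcyclicOn n (⋃ i ∈ s, U m ∩ U i)) :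
    IsAcyclicOn (n + 1) (⋃ i ∈ insert m s, U i) := by
  rw [← inter_iUnion₂] at hlink
  rw [Finset.set_biUnion_insert]
  refine IsAcyclicOn.union (h.isOpen m (Finset.mem_insert_self m s))
    (h.mono (Finset.subset_insert m s)).isOpen_biUnion ?_ hs hlink
  rcases (U m).eq_empty_or_nonempty with hm | hm
  · rw [hm]
    exact isAcyclicOn_succ_empty n
  · exact h.isAcyclicOn_member (Finset.mem_insert_self m s) hm _

theorem isAcyclicOn_biUnion_of_card_le {s : Finset ι} : ∀ {U : ι → Set Z},
    IsAcyclicFamily s U → ∀ {n : ℕ}, (∀ T ⊆ s, (⋂ i ∈ T, U i).Nonempty → T.card ≤ n) →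
    IsAcyclicOn (n + 1) (⋃ i ∈ s, U i) := by
  classical
  induction s using Finset.induction_on with
  | empty =>
    intro U _ n _
    simpa using isAcyclicOn_succ_empty n
  | insert m s hm ih =>
    intro U hU n hn
    have hs := ih (hU.mono (Finset.subset_insert m s)) fun T hT =>
      hn T (hT.trans (Finset.subset_insert m s))
    cases n with
    | zero =>
      have hempty : U m = ∅ := by
        by_contra hne
        simpa using hn {m} (by simp) (by simpa using nonempty_iff_ne_empty.2 hne)
      rwa [Finset.set_biUnion_insert, hempty, empty_union]
    | succ n =>
      refine hU.isAcyclicOn_biUnion_insert hs (ih hU.link fun T hT hne => ?_)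
      rcases T.eq_empty_or_nonempty with rfl | hTne
      · exact Nat.zero_le n
      · rw [biInter_inter_eq m hTne] at hne
        have hcard := hn _ (Finset.insert_subset_insert m hT) hne
        rwa [Finset.card_insert_of_notMem fun h => hm (hT h), Nat.add_le_add_iff_right] at hcard

theorem exists_nonempty_biInter {s : Finset ι} {U : ι → Set Z} (hU : IsAcyclicFamily s U) {n : ℕ}
    (h : ¬ IsAcyclicOn (n + 1) (⋃ i ∈ s, U i)) :
    ∃ T ⊆ s, (⋂ i ∈ T, U i).Nonempty ∧ n + 1 ≤ T.card := by
  by_contra! hlt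
  exact h (hU.isAcyclicOn_biUnion_of_card_le fun T hT hne => Nat.lt_succ_iff.1 (hlt T hT hne))

theorem isAcyclicOn_biUnion_of_nonempty_biInter {s : Finset ι} : ∀ {U : ι → Set Z},
    IsAcyclicFamily s U → s.Nonempty → (⋂ i ∈ s, U i).Nonempty →
    ∀ n, IsAcyclicOn n (⋃ i ∈ s, U i) := by
  classical
  induction s using Finset.induction_on with
  | empty => exact fun _ h => absurd h Finset.not_nonempty_empty
  | insert m s hm ih =>
    intro U hU _ hne n
    rcases s.eq_empty_or_nonempty with rfl | hs
    · rw [insert_empty_eq, Finset.set_biUnion_singleton]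
      exact hU.isAcyclicOn_member (Finset.mem_insert_self m _) (by simpa using hne) n
    · have hlink : (⋂ i ∈ s, (U m ∩ U i)).Nonempty := by rwa [biInter_inter_eq m hs]
      rw [Finset.set_biInter_insert] at hne
      cases n with
      | zero =>
        rw [Finset.set_biUnion_insert]
        exact isAcyclicOn_zero (hne.left.mono subset_union_left)
      | succ n =>
        exact hU.isAcyclicOn_biUnion_insert
          (ih (hU.mono (Finset.subset_insert m s)) hs hne.right _) (ih hU.link hs hlink n)

theorem add_two_le_card {n₁ : ℕ} : ∀ {s : Finset ι} {U : ι → Set Z} {n₂ : ℕ},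
    IsAcyclicFamily s U → n₂ < n₁ → ¬ IsAcyclicOn n₁ (⋃ i ∈ s, U i) →
    ¬ IsAcyclicOn n₂ (⋃ i ∈ s, U i) → n₁ + 2 ≤ s.card := by
  classical
  induction n₁ with
  | zero => exact fun _ h => absurd h (Nat.not_lt_zero _)
  | succ n₁ ih =>
    intro s U n₂ hU hlt h₁ h₂
    obtain ⟨T, hT, hne, hcard⟩ := hU.exists_nonempty_biInter h₁
    have hTne : T.Nonempty := Finset.card_pos.1 (by lia)
    have hTac := (hU.mono hT).isAcyclicOn_biUnion_of_nonempty_biInter hTne hne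
    have hss : T ⊂ s := hT.ssubset_of_ne (by rintro rfl; exact h₁ (hTac _))
    obtain ⟨m, hm, hmT⟩ := Finset.exists_of_ssubset hss
    by_contra! hs
    -- The only member outside `T` is `U m`, so the cohomology of the union is that of its link.
    obtain rfl : insert m T = s := Finset.eq_of_subset_of_card_le
      (Finset.insert_subset hm hT) (by rw [Finset.card_insert_of_notMem hmT]; lia)
    rw [Finset.card_insert_of_notMem hmT] at hs
    cases n₂ with
    | zero =>
      obtain ⟨j, hj⟩ := hTne
      exact h₂ (isAcyclicOn_zero (hne.mono ((biInter_subset_of_mem hj).trans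
        (subset_biUnion_of_mem (Finset.mem_insert_of_mem hj)))))
    | succ n₂ =>
      have := ih hU.link (Nat.lt_of_succ_lt_succ hlt)
        (fun h => h₁ (hU.isAcyclicOn_biUnion_insert (hTac _) h))
        (fun h => h₂ (hU.isAcyclicOn_biUnion_insert (hTac _) h))
      lia

theorem exists_subset_of_not_isCoboundaryOn_cup {s : Finset ι} {U : ι → Set Z}
    (hU : IsAcyclicFamily s U) {p q r : ℕ} (hp : 0 < p) (hq : 0 < q) (h : p + q = r)
    {x : Cochain Z (p + 1)} {y : Cochain Z (q + 1)} (hx : IsCocycleOn (⋃ i ∈ s, U i) x)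
    (hy : IsCocycleOn (⋃ i ∈ s, U i) y) (hxy : ¬ IsCoboundaryOn (⋃ i ∈ s, U i) (cup h x y)) :
    ∃ R ⊆ s, R.card + (r + 1) ≤ s.card ∧ ¬ IsCoboundaryOn (⋃ i ∈ R, U i) x ∧
      ¬ IsCoboundaryOn (⋃ i ∈ R, U i) y := by
  classical
  obtain ⟨p, rfl⟩ := Nat.exists_eq_succ_of_ne_zero hp.ne'
  obtain ⟨q, rfl⟩ := Nat.exists_eq_succ_of_ne_zero hq.ne'
  obtain ⟨T, hT, hne, hcard⟩ := hU.exists_nonempty_biInter fun hac => hxy (hac _ (hx.cup h hy))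
  have hTac := (hU.mono hT).isAcyclicOn_biUnion_of_nonempty_biInter
    (Finset.card_pos.1 (by lia)) hne
  have hR : s \ T ⊆ s := Finset.sdiff_subset
  have hunion : ⋃ i ∈ s, U i = (⋃ i ∈ T, U i) ∪ ⋃ i ∈ s \ T, U i := by
    rw [← Finset.set_biUnion_union, Finset.union_sdiff_of_subset hT]
  have hTopen := (hU.mono hT).isOpen_biUnion
  have hRopen := (hU.mono hR).isOpen_biUnion
  refine ⟨s \ T, hR, ?_, fun hxR => hxy ?_, fun hyR => hxy ?_⟩
  · have := Finset.card_sdiff_add_card_eq_card hT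
    lia
  · rw [hunion, union_comm] at hx hy ⊢
    exact isCoboundaryOn_union_cup hRopen hTopen h hx hy hxR (hTac _ y (hy.mono subset_union_right))
  · rw [hunion] at hx hy ⊢
    exact isCoboundaryOn_union_cup hTopen hRopen h hx hy (hTac _ x (hx.mono subset_union_left)) hyR

end IsAcyclicFamily

end GoodCovers

section CupProducts

open Set

variable {X Z : Type*} [TopologicalSpace X] [TopologicalSpace Z] {V W : Set Z} {ds : List ℕ} {r : ℕ}

/-- Iterated cup products of cocycles on `V` whose degrees form a given list. -/
inductive IsCupProductOn (V : Set Z) : List ℕ → ∀ {r : ℕ}, Cochain Z (r + 1) → Prop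
  | one : IsCupProductOn V [] (1 : Cochain Z (0 + 1))
  | cup {d r r' : ℕ} {ds : List ℕ} (h : d + r = r') {x : Cochain Z (d + 1)}
      {y : Cochain Z (r + 1)} (hx : IsCocycleOn V x) (hy : IsCupProductOn V ds y) :
      IsCupProductOn V (d :: ds) (cup h x y)

theorem isCocycleOn_one : IsCocycleOn V (1 : Cochain Z (0 + 1)) := fun σ _ => by
  rw [coboundary_apply, Fin.sum_univ_two]
  exact ZModModule.add_self 1

namespace IsCupProductOn

theorem mono {y : Cochain Z (r + 1)} (h : IsCupProductOn W ds y) (hVW : V ⊆ W) :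
    IsCupProductOn V ds y := by
  induction h with
  | one => exact one
  | cup h hx _ ih => exact cup h (hx.mono hVW) ih

theorem pullback {V : Set X} {f : C(X, Z)} (hf : MapsTo f V W) {y : Cochain Z (r + 1)}
    (h : IsCupProductOn W ds y) : IsCupProductOn V ds (pullback f y) := by
  induction h with
  | one => exact one
  | cup h hx _ ih => exact cup h (hx.pullback hf) ih

theorem isCocycleOn {y : Cochain Z (r + 1)} (h : IsCupProductOn V ds y) : IsCocycleOn V y := by
  induction h with
  | one => exact isCocycleOn_one
  | cup h hx _ ih => exact hx.cup h ih

theorem eq_sum {y : Cochain Z (r + 1)} (h : IsCupProductOn V ds y) : r = ds.sum := by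
  induction h with
  | one => rfl
  | cup h _ _ ih => rw [List.sum_cons, ← ih, h]

theorem append {y : Cochain Z (r + 1)} (hy : IsCupProductOn V ds y) {d : ℕ}
    {x : Cochain Z (d + 1)} (hx : IsCocycleOn V x) {r' : ℕ} (h : r + d = r') :
    IsCupProductOn V (ds ++ [d]) (CoveringType.cup h y x) := by
  induction hy generalizing r' with
  | one =>
    obtain rfl : d = r' := by rw [← h, Nat.zero_add]
    rw [one_cup, ← cup_one x]
    exact cup _ hx one
  | cup h₁ hx' _ ih =>
    rw [cup_assoc h₁ h rfl (by lia)]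
    exact cup _ hx' (ih rfl)

end IsCupProductOn

/-- A lower bound for the size of a good cover of a space that carries a nontrivial cup product of
cocycles of the given increasing positive degrees; fewer than two degrees give the trivial bound
`0`. -/
def coverBound : List ℕ → ℕ
  | [a, b] => a + 2 * b + 4
  | a :: b :: c :: ds => a + (b :: c :: ds).sum + 1 + coverBound (b :: c :: ds)
  | _ => 0

theorem IsAcyclicFamily.coverBound_le_card {ι : Type*} {U : ι → Set Z} : ∀ {ds : List ℕ}
    {s : Finset ι} {r : ℕ} {y : Cochain Z (r + 1)}, (∀ d ∈ ds, 0 < d) → ds.Pairwise (· < ·) →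
    IsAcyclicFamily s U → IsCupProductOn (⋃ i ∈ s, U i) ds y →
    ¬ IsCoboundaryOn (⋃ i ∈ s, U i) y → coverBound ds ≤ s.card
  | [], _, _, _, _, _, _, _, _ => Nat.zero_le _
  | [_], _, _, _, _, _, _, _, _ => Nat.zero_le _
  | [a, b], s, _, _, hpos, hlt, hU, .cup h hx hy, hn => by
    have hsum := hy.eq_sum
    rw [List.sum_singleton] at hsum
    subst hsum
    simp only [List.forall_mem_cons, List.pairwise_cons] at hpos hlt
    obtain ⟨R, hR, hcard, hxR, hyR⟩ :=
      hU.exists_subset_of_not_isCoboundaryOn_cup hpos.1 hpos.2.1 h hx hy.isCocycleOn hn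
    have hRs : ⋃ i ∈ R, U i ⊆ ⋃ i ∈ s, U i := biUnion_subset_biUnion_left hR
    have := (hU.mono hR).add_two_le_card (Nat.succ_lt_succ hlt.1.1)
      (fun hac => hyR (hac _ (hy.isCocycleOn.mono hRs))) fun hac => hxR (hac _ (hx.mono hRs))
    rw [coverBound]
    lia
  | a :: b :: c :: ds, s, _, _, hpos, hlt, hU, .cup h hx hy, hn => by
    have hsum := hy.eq_sum
    rw [List.forall_mem_cons] at hpos
    rw [List.pairwise_cons] at hlt
    have hr : 0 < (b :: c :: ds).sum := by
      have := hpos.2 b List.mem_cons_self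
      rw [List.sum_cons]
      lia
    obtain ⟨R, hR, hcard, -, hyR⟩ :=
      hU.exists_subset_of_not_isCoboundaryOn_cup hpos.1 (hsum ▸ hr) h hx hy.isCocycleOn hn
    have hRs : ⋃ i ∈ R, U i ⊆ ⋃ i ∈ s, U i := biUnion_subset_biUnion_left hR
    have := coverBound_le_card hpos.2 hlt.2 (hU.mono hR) (hy.mono hRs) hyR
    rw [coverBound]
    lia

theorem six_mul_coverBound_range' (a j : ℕ) :
    6 * coverBound (List.range' a (j + 2) 4) =
      (j + 2) * (j + 3) * (3 * a + 8 * j + 8) + 6 * (j + 4) := by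
  induction j generalizing a with
  | zero =>
    simp only [List.range', coverBound]
    ring
  | succ j ih =>
    have hcons : coverBound (List.range' a (j + 3) 4) =
        a + (List.range' (a + 4) (j + 2) 4).sum + 1 +
          coverBound (List.range' (a + 4) (j + 2) 4) := rfl
    have hsum : (List.range' (a + 4) (j + 2) 4).sum = (j + 2) * (a + 2 * j + 6) := by
      rw [List.sum_range', Nat.mul_div_assoc _ (by norm_num : 2 ∣ 4),
        Nat.add_sub_assoc (by norm_num)]
      ring
    rw [hcons, hsum, mul_add, ih]
    ring

end CupProducts

section ConnectingHomomorphism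

open Set

variable {Z : Type*} [TopologicalSpace Z] {A B : Set Z} {q r r' : ℕ}

theorem exists_connectingCocycle (hA : IsOpen A) (hB : IsOpen B) {v : Cochain Z q}
    (hv : IsCocycleOn (A ∩ B) v) :
    ∃ c : Cochain Z (q + 1), IsCocycleOn (A ∪ B) c ∧
      EqOn c (coboundary v) (simplicesIn A _) ∧ EqOn c 0 (simplicesIn B _) := by
  let c₀ : Cochain Z (q + 1) := (simplicesIn A _).indicator (coboundary v)
  have hcA : EqOn c₀ (coboundary v) (simplicesIn A _) := eqOn_indicator
  have hcB : EqOn c₀ 0 (simplicesIn B _) := fun σ hσB => by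
    by_cases hσA : σ ∈ simplicesIn A _
    · exact (hcA hσA).trans (hv fun t => ⟨hσA t, hσB t⟩)
    · exact indicator_of_notMem hσA _
  obtain ⟨c, hc, hcc₀⟩ := exists_isCocycleOn_union_eqOn hA hB
    ((isCocycleOn_coboundary A v).congr hcA)
    (isCocycleOn_zero.congr hcB)
  exact ⟨c, hc, (hcc₀.mono subset_union_left).trans hcA, (hcc₀.mono subset_union_right).trans hcB⟩

theorem exists_isCocycleOn_add_eq_cup (h : r + q = r') (h' : r + (q + 1) = r' + 1)
    {y : Cochain Z (r + 1)} (hy : IsCocycleOn A y) {v : Cochain Z (q + 1)}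
    {c : Cochain Z (q + 2)} (hcA : EqOn c (coboundary v) (simplicesIn A _))
    (hcB : EqOn c 0 (simplicesIn B _)) (hyc : IsCoboundaryOn (A ∪ B) (cup h' y c)) :
    ∃ a b : Cochain Z (r' + 1), IsCocycleOn A a ∧ IsCocycleOn B b ∧ a + b = cup h y v := by
  obtain ⟨η, hη⟩ := hyc
  refine ⟨cup h y v + η, η, fun σ hσ => ?_, fun σ hσ => ?_, ?_⟩
  · rw [map_add, Pi.add_apply, eqOn_coboundary_cup_right h h' hy v hσ,
      ← hη (simplicesIn_mono subset_union_left hσ), eqOn_cup h' (eqOn_refl _ _) hcA hσ,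
      ZModModule.add_self, Pi.zero_apply]
  · rw [← hη (simplicesIn_mono subset_union_right hσ), eqOn_cup h' (eqOn_refl _ _) hcB hσ,
      cup_zero]
  · rw [add_assoc, ZModModule.add_self, add_zero]

end ConnectingHomomorphism

section SphereProducts

open Set

variable {F : Type*} {m n : ℕ}

/-- The product of `F` with `ℝᵐ ∖ {0}`, a homotopy model for the product of `F` with a sphere of
dimension `m - 1`. All these spaces live in `F × (ℕ → ℝ)`, the coordinates of index at least `m`
being unconstrained, so that they are nested. -/
def sphereProd (F : Type*) (m : ℕ) : Set (F × (ℕ → ℝ)) := {z | ∃ i < m, z.2 i ≠ 0}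

/-- The product of `F` with the complement in `ℝᵐ⁺¹` of a closed ray on the last coordinate axis;
the sign `s` selects the half of the axis that is kept. -/
def hemisphereProd (F : Type*) (s : ℝ) (m : ℕ) : Set (F × (ℕ → ℝ)) :=
  sphereProd F m ∪ {z | 0 < s * z.2 m}

theorem sphereProd_subset_hemisphereProd (s : ℝ) : sphereProd F m ⊆ hemisphereProd F s m :=
  subset_union_left

theorem hemisphereProd_inter (F : Type*) (m : ℕ) :
    hemisphereProd F 1 m ∩ hemisphereProd F (-1) m = sphereProd F m := by
  have hdisj : {z : F × (ℕ → ℝ) | 0 < 1 * z.2 m} ∩ {z | 0 < -1 * z.2 m} = ∅ :=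
    eq_empty_of_forall_notMem fun z hz => by
      have h₁ : 0 < 1 * z.2 m := hz.1
      have h₂ : 0 < -1 * z.2 m := hz.2
      linarith
  rw [hemisphereProd, hemisphereProd, ← union_inter_distrib_left, hdisj, union_empty]

theorem hemisphereProd_union (F : Type*) (m : ℕ) :
    hemisphereProd F 1 m ∪ hemisphereProd F (-1) m = sphereProd F (m + 1) := by
  ext z
  have hsign : 0 < 1 * z.2 m ∨ 0 < -1 * z.2 m ↔ z.2 m ≠ 0 := by
    rw [one_mul, neg_one_mul, neg_pos, or_comm, lt_or_lt_iff_ne]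
  calc z ∈ hemisphereProd F 1 m ∪ hemisphereProd F (-1) m
    _ ↔ z ∈ sphereProd F m ∨ (0 < 1 * z.2 m ∨ 0 < -1 * z.2 m) := or_or_distrib_left.symm
    _ ↔ z ∈ sphereProd F (m + 1) := by rw [hsign]; exact Nat.exists_lt_succ_right.symm

theorem hemisphereProd_subset_sphereProd {s : ℝ} (hs : s * s = 1) :
    hemisphereProd F s m ⊆ sphereProd F (m + 1) := by
  rw [← hemisphereProd_union]
  rcases mul_self_eq_one_iff.1 hs with rfl | rfl
  exacts [subset_union_left, subset_union_right]

variable [TopologicalSpace F]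

/-- The slice `F × {x}` of `F × (ℕ → ℝ)`. -/
def slice (x : ℕ → ℝ) : C(F, F × (ℕ → ℝ)) := ⟨fun f => (f, x), by fun_prop⟩

theorem slice_mem_sphereProd {s : ℝ} (hs : s ≠ 0) (hm : 0 < m) (f : F) :
    slice (Pi.single 0 s) f ∈ sphereProd F m :=
  ⟨0, hm, by simpa [slice] using hs⟩

theorem isOpen_sphereProd (F : Type*) [TopologicalSpace F] (m : ℕ) : IsOpen (sphereProd F m) := by
  have : sphereProd F m = ⋃ i ∈ Finset.range m, {z | z.2 i ≠ 0} := by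
    ext
    simp [sphereProd]
  rw [this]
  exact isOpen_biUnion fun i _ => isOpen_ne_fun (by fun_prop) continuous_const

theorem isOpen_hemisphereProd (F : Type*) [TopologicalSpace F] (s : ℝ) (m : ℕ) :
    IsOpen (hemisphereProd F s m) :=
  (isOpen_sphereProd F m).union (isOpen_lt continuous_const (by fun_prop))

/-- The straight-line homotopy from the identity to the projection onto `F × {x}`. -/
def lineHomotopy (x : ℕ → ℝ) : (ContinuousMap.id (F × (ℕ → ℝ))).Homotopy
    ((slice x).comp ContinuousMap.fst) where
  toFun p := (p.2.1, (1 - (p.1 : ℝ)) • p.2.2 + (p.1 : ℝ) • x)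
  map_zero_left z := by ext <;> simp
  map_one_left z := by ext <;> simp [slice]

theorem lineHomotopy_apply (x : ℕ → ℝ) (t : unitInterval) (z : F × (ℕ → ℝ)) :
    lineHomotopy x (t, z) = (z.1, (1 - (t : ℝ)) • z.2 + (t : ℝ) • x) := rfl

theorem lineHomotopy_mem {s : ℝ} (hs : s * s = 1) (z : F × (ℕ → ℝ)) (hz : z ∈ hemisphereProd F s m)
    (t : unitInterval) : lineHomotopy (Pi.single m s) (t, z) ∈ hemisphereProd F s m := by
  have ht : (t : ℝ) ≤ 1 := t.2.2
  have hlast : s * (lineHomotopy (Pi.single m s) (t, z)).2 m = (1 - t) * (s * z.2 m) + t := by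
    simp only [lineHomotopy_apply, Pi.add_apply, Pi.smul_apply, Pi.single_eq_same, smul_eq_mul]
    linear_combination (t : ℝ) * hs
  rcases ht.eq_or_lt with h1 | h1
  · refine Or.inr (lt_of_lt_of_eq ?_ hlast.symm)
    rw [h1]
    norm_num
  rcases hz with ⟨i, hi, hne⟩ | hz
  · refine Or.inl ⟨i, hi, ?_⟩
    simpa [lineHomotopy_apply, hi.ne, sub_ne_zero.2 h1.ne'] using hne
  · refine Or.inr (lt_of_lt_of_eq ?_ hlast.symm)
    exact add_pos_of_pos_of_nonneg (mul_pos (sub_pos.2 h1) hz) t.2.1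

theorem isCoboundaryOn_add_pullback_fst_slice {s : ℝ} (hs : s * s = 1)
    {α : Cochain (F × (ℕ → ℝ)) n} (hα : IsCocycleOn (hemisphereProd F s m) α) {x : ℕ → ℝ}
    (hx : ∀ f, slice x f ∈ hemisphereProd F s m) :
    IsCoboundaryOn (hemisphereProd F s m)
      (α + pullback ContinuousMap.fst (pullback (slice x) α)) := by
  let p : C(F × (ℕ → ℝ), F × (ℕ → ℝ)) := (slice (Pi.single m s)).comp ContinuousMap.fst
  let p' : C(F × (ℕ → ℝ), F × (ℕ → ℝ)) := (slice x).comp ContinuousMap.fst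
  have hp : IsCoboundaryOn (hemisphereProd F s m) (α + pullback p α) :=
    isCoboundaryOn_pullback_add_pullback (lineHomotopy _) (lineHomotopy_mem hs) hα
  -- Since `p ∘ p' = p`, pulling back along `p'` compares `p` with `p'`.
  have hp' : IsCoboundaryOn (hemisphereProd F s m) (pullback p' α + pullback p α) :=
    hp.pullback (f := p') fun z _ => hx z.1
  have h := hp.add hp'
  rwa [add_add_add_comm, ZModModule.add_self, add_zero] at h

theorem isCoboundaryOn_hemisphereProd {s : ℝ} (hs : s * s = 1) {α : Cochain (F × (ℕ → ℝ)) n}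
    (hα : IsCocycleOn (hemisphereProd F s m) α) {x : ℕ → ℝ}
    (hx : ∀ f, slice x f ∈ hemisphereProd F s m)
    (h : IsCoboundaryOn univ (pullback (slice x) α)) : IsCoboundaryOn (hemisphereProd F s m) α :=
  (isCoboundaryOn_add_pullback_fst_slice hs hα hx).of_add
    (h.pullback (f := ContinuousMap.fst) (mapsTo_univ _ _))

theorem isCoboundaryOn_sphereProd_of_slice {α : Cochain (F × (ℕ → ℝ)) n} (hnm : n < m)
    (hα : IsCocycleOn (sphereProd F m) α)
    (h : IsCoboundaryOn univ (pullback (slice (Pi.single 0 1)) α)) :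
    IsCoboundaryOn (sphereProd F m) α := by
  induction m generalizing n with
  | zero => exact absurd hnm (Nat.not_lt_zero n)
  | succ m ih =>
  cases n with
  | zero =>
    intro σ _
    rw [Simplex.eq_of_zero σ ((slice (Pi.single 0 1)).comp (ContinuousMap.fst.comp σ))]
    exact h (x := ContinuousMap.fst.comp σ) fun _ => mem_univ _
  | succ n =>
    have hslice (f : F) : slice (Pi.single 0 1) f ∈ sphereProd F m :=
      slice_mem_sphereProd one_ne_zero (Nat.zero_lt_of_lt (Nat.lt_of_succ_lt_succ hnm)) f
    have hhalf {s : ℝ} (hs : s * s = 1) : IsCoboundaryOn (hemisphereProd F s m) α :=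
      isCoboundaryOn_hemisphereProd hs (hα.mono (hemisphereProd_subset_sphereProd hs))
        (fun f => sphereProd_subset_hemisphereProd s (hslice f)) h
    obtain ⟨β₁, hβ₁⟩ := hhalf (one_mul 1)
    obtain ⟨β₂, hβ₂⟩ := hhalf (by norm_num : (-1 : ℝ) * -1 = 1)
    have hβ : IsCocycleOn (sphereProd F m) (β₁ + β₂) := fun σ hσ => by
      rw [map_add, Pi.add_apply, ← hβ₁ (simplicesIn_mono (sphereProd_subset_hemisphereProd 1) hσ),
        ← hβ₂ (simplicesIn_mono (sphereProd_subset_hemisphereProd (-1)) hσ), ZModModule.add_self,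
        Pi.zero_apply]
    -- Correcting `β₁` by `γ` makes the difference of the two primitives vanish on the slice.
    let γ : Cochain (F × (ℕ → ℝ)) n :=
      pullback ContinuousMap.fst (pullback (slice (Pi.single 0 1)) (β₁ + β₂))
    have hγ : IsCocycleOn univ γ :=
      (hβ.pullback fun f _ => hslice f : IsCocycleOn univ _).pullback (mapsTo_univ _ _)
    rw [← hemisphereProd_union] at hα ⊢
    refine hα.isCoboundaryOn_union (isOpen_hemisphereProd F 1 m) (isOpen_hemisphereProd F (-1) m)
      (βA := β₁ + γ) (fun σ hσ => ?_) hβ₂ ?_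
    · rw [map_add, Pi.add_apply, hγ (fun _ => mem_univ _), Pi.zero_apply, add_zero, hβ₁ hσ]
    · rw [hemisphereProd_inter, add_right_comm]
      refine ih (Nat.lt_of_succ_lt_succ hnm) (hβ.add (hγ.mono (subset_univ _))) ?_
      have hsum : pullback (slice (Pi.single 0 1)) (β₁ + β₂ + γ) = 0 := by
        rw [map_add]
        exact ZModModule.add_self _
      rw [hsum]
      exact isCoboundaryOn_zero

theorem isAcyclicOn_sphereProd {l : ℕ} (hl : 2 ≤ l)
    (hF : ∀ n ≥ l, IsAcyclicOn n (univ : Set F)) (hn : l + m ≤ n + 1) :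
    IsAcyclicOn n (sphereProd F m) := by
  induction m generalizing n with
  | zero =>
    have hempty : sphereProd F 0 = ∅ := by simp [sphereProd]
    obtain ⟨n, rfl⟩ := Nat.exists_eq_succ_of_ne_zero (by lia : n ≠ 0)
    rw [hempty]
    exact isAcyclicOn_succ_empty n
  | succ m ih =>
    obtain ⟨n, rfl⟩ := Nat.exists_eq_succ_of_ne_zero (by lia : n ≠ 0)
    have hhalf {s : ℝ} (hs : s * s = 1) : IsAcyclicOn (n + 1) (hemisphereProd F s m) := by
      have hslice (f : F) : slice (Pi.single m s) f ∈ hemisphereProd F s m :=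
        Or.inr (by simp [slice, hs])
      exact fun α hα => isCoboundaryOn_hemisphereProd hs hα hslice
        (hF _ (by lia) _ (hα.pullback fun f _ => hslice f))
    rw [← hemisphereProd_union]
    refine IsAcyclicOn.union (isOpen_hemisphereProd F 1 m) (isOpen_hemisphereProd F (-1) m)
      (hhalf (one_mul 1)) (hhalf (by norm_num)) ?_
    rw [hemisphereProd_inter]
    exact ih (by lia)

end SphereProducts

section FundamentalClass

open Set

variable {F : Type*} [TopologicalSpace F] {m n q r r' : ℕ}

/-- Coboundaries in the unreduced cochain complex, as opposed to the augmented one: a cochain of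
degree `0` is a coboundary only if it vanishes. -/
def IsUnreducedCoboundary : ∀ {r : ℕ}, Cochain F (r + 1) → Prop
  | 0, y => y = 0
  | _ + 1, y => IsCoboundaryOn univ y

/-- The degree `0` cochain that takes the value `1` at the points with positive first coordinate
and the value `0` elsewhere. -/
noncomputable def signCochain (F : Type*) [TopologicalSpace F] : Cochain (F × (ℕ → ℝ)) 1 :=
  fun σ => if 0 < (σ (stdSimplex.vertex 0)).2 0 then 1 else 0

theorem pullback_slice_signCochain (s : ℝ) :
    pullback (slice (Pi.single 0 s)) (signCochain F) = if 0 < s then 1 else 0 := by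
  funext σ
  have hs : pullback (slice (Pi.single 0 s)) (signCochain F) σ = if 0 < s then 1 else 0 := by
    simp [pullback_apply, signCochain, slice]
  rw [hs]
  split_ifs <;> rfl

theorem isCocycleOn_signCochain : IsCocycleOn (sphereProd F 1) (signCochain F) := by
  intro σ hσ
  have hcont : Continuous fun t => (σ t).2 0 := by fun_prop
  have : PreconnectedSpace (Simplex 2) :=
    Subtype.preconnectedSpace (convex_stdSimplex ℝ (Fin 2)).isPreconnected
  have hpos {a b : Simplex 2} (ha : 0 < (σ a).2 0) : 0 < (σ b).2 0 := by
    by_contra! hb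
    obtain ⟨t, ht⟩ := mem_range_of_exists_le_of_exists_ge hcont ⟨b, hb⟩ ⟨a, ha.le⟩
    obtain ⟨i, hi, hne⟩ := hσ t
    exact hne ((Nat.lt_one_iff.1 hi).symm ▸ ht)
  have hface (i : Fin 2) : signCochain F (σ.comp (simplexMap i.succAbove)) =
      if 0 < (σ (stdSimplex.vertex 0)).2 0 then 1 else 0 :=
    if_congr ⟨hpos, hpos⟩ rfl rfl
  rw [coboundary_apply, Fin.sum_univ_two, hface, hface, ZModModule.add_self, Pi.zero_apply]

/-- A cocycle `v` on the product of `F` with a `q`-sphere that represents the pullback of the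
fundamental class of the sphere, normalized to vanish on a slice: the cup product with `v` of a
class that is nontrivial on a slice is nontrivial. -/
structure IsFundamentalClass (v : Cochain (F × (ℕ → ℝ)) (q + 1)) : Prop where
  isCocycleOn : IsCocycleOn (sphereProd F (q + 1)) v
  pullback_slice_eq_zero : pullback (slice (Pi.single 0 (-1))) v = 0
  not_isCoboundaryOn_cup {r r' : ℕ} (h : r + q = r') {y : Cochain (F × (ℕ → ℝ)) (r + 1)} :
    IsCocycleOn (sphereProd F (q + 1)) y →
    ¬ IsUnreducedCoboundary (pullback (slice (Pi.single 0 1)) y) →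
    ¬ IsCoboundaryOn (sphereProd F (q + 1)) (cup h y v)

theorem isFundamentalClass_signCochain : IsFundamentalClass (q := 0) (signCochain F) where
  isCocycleOn := isCocycleOn_signCochain
  pullback_slice_eq_zero := by rw [pullback_slice_signCochain, if_neg (by norm_num)]
  not_isCoboundaryOn_cup {r _} h y _ hy hcob := by
    obtain rfl : r = _ := h
    refine hy ?_
    have hslice {s : ℝ} (hs : s ≠ 0) : MapsTo (slice (Pi.single 0 s)) univ (sphereProd F 1) :=
      fun f _ => slice_mem_sphereProd hs one_pos f
    have hnorth : pullback (slice (Pi.single 0 1)) (cup r.add_zero y (signCochain F)) =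
        pullback (slice (Pi.single 0 1)) y := by
      rw [pullback_cup, pullback_slice_signCochain, if_pos one_pos, cup_one]
    have hsouth : pullback (slice (Pi.single 0 (-1))) (cup r.add_zero y (signCochain F)) = 0 := by
      rw [pullback_cup, pullback_slice_signCochain, if_neg (by norm_num), cup_zero]
    cases r with
    | succ r => exact hnorth ▸ hcob.pullback (hslice one_ne_zero)
    | zero =>
      obtain ⟨η, hη⟩ := hcob
      -- The coboundary of a cochain of degree `-1` takes the same value at all points.
      have hconst (τ τ' : C(Simplex 1, F × (ℕ → ℝ))) : coboundary η τ = coboundary η τ' := by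
        simp only [coboundary_apply]
        exact Finset.sum_congr rfl fun i _ => congrArg η (Simplex.eq_of_zero _ _)
      funext σ
      calc pullback (slice (Pi.single 0 1)) y σ
        _ = pullback (slice (Pi.single 0 1)) (cup _ y (signCochain F)) σ := by rw [hnorth]
        _ = coboundary η ((slice (Pi.single 0 1)).comp σ) :=
          hη fun t => hslice one_ne_zero (mem_univ (σ t))
        _ = coboundary η ((slice (Pi.single 0 (-1))).comp σ) := hconst _ _
        _ = pullback (slice (Pi.single 0 (-1))) (cup _ y (signCochain F)) σ :=
          (hη fun t => hslice (by norm_num) (mem_univ (σ t))).symm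
        _ = 0 := by rw [hsouth, Pi.zero_apply]

theorem isCoboundaryOn_sphereProd_of_add {a b : Cochain (F × (ℕ → ℝ)) n}
    (ha : IsCocycleOn (hemisphereProd F 1 m) a) (hb : IsCocycleOn (hemisphereProd F (-1) m) b)
    {x : ℕ → ℝ} (hx : ∀ f : F, slice x f ∈ sphereProd F m) (h0 : pullback (slice x) (a + b) = 0) :
    IsCoboundaryOn (sphereProd F m) (a + b) := by
  have hmem (s : ℝ) (f : F) := sphereProd_subset_hemisphereProd s (hx f)
  have ha' := (isCoboundaryOn_add_pullback_fst_slice (one_mul 1) ha (hmem 1)).mono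
    (sphereProd_subset_hemisphereProd 1)
  have hb' := (isCoboundaryOn_add_pullback_fst_slice (by norm_num) hb (hmem (-1))).mono
    (sphereProd_subset_hemisphereProd (-1))
  have h := ha'.add hb'
  rwa [add_add_add_comm, ← map_add, ← map_add, h0, map_zero, add_zero] at h

theorem exists_isFundamentalClass (F : Type*) [TopologicalSpace F] (q : ℕ) :
    ∃ v : Cochain (F × (ℕ → ℝ)) (q + 1), IsFundamentalClass v := by
  induction q with
  | zero => exact ⟨signCochain F, isFundamentalClass_signCochain⟩
  | succ q ih =>
    obtain ⟨v, hv⟩ := ih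
    obtain ⟨c, hc, hcA, hcB⟩ := exists_connectingCocycle (isOpen_hemisphereProd F 1 (q + 1))
      (isOpen_hemisphereProd F (-1) (q + 1)) (v := v) (by
        rw [hemisphereProd_inter]
        exact hv.isCocycleOn)
    rw [hemisphereProd_union] at hc
    have hslice (f : F) : slice (Pi.single 0 (-1)) f ∈ sphereProd F (q + 1) :=
      slice_mem_sphereProd (by norm_num) q.succ_pos f
    refine ⟨c, hc, ?_, fun {r r'} h y hy hyn hyc => ?_⟩
    · funext σ
      exact hcB fun t => sphereProd_subset_hemisphereProd (-1) (hslice (σ t))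
    · obtain ⟨r', rfl⟩ := Nat.exists_eq_succ_of_ne_zero (by lia : r' ≠ 0)
      have h' : r + q = r' := by lia
      have hpos : IsCocycleOn (hemisphereProd F 1 (q + 1)) y :=
        hy.mono (hemisphereProd_subset_sphereProd (one_mul 1))
      rw [← hemisphereProd_union] at hyc
      obtain ⟨a, b, ha, hb, hab⟩ := exists_isCocycleOn_add_eq_cup h' h hpos hcA hcB hyc
      refine hv.not_isCoboundaryOn_cup h' (hpos.mono (sphereProd_subset_hemisphereProd 1)) hyn ?_
      rw [← hab]
      refine isCoboundaryOn_sphereProd_of_add ha hb hslice ?_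
      rw [hab, pullback_cup, hv.pullback_slice_eq_zero, cup_zero]

end FundamentalClass

section DeformationRetracts

open Set

variable {F G X Y : Type*} [TopologicalSpace F] [TopologicalSpace G] [TopologicalSpace X]
  [TopologicalSpace Y] {n : ℕ}

theorem isCoboundaryOn_univ_add_pullback {p : C(X, X)} (hp : p.Homotopic (ContinuousMap.id X))
    {α : Cochain X n} (hα : IsCocycleOn univ α) : IsCoboundaryOn univ (α + pullback p α) := by
  obtain ⟨H⟩ := hp.symm
  exact isCoboundaryOn_pullback_add_pullback H (fun _ _ _ => mem_univ _) hα

theorem isCoboundaryOn_univ_of_homotopic_id {p : C(X, Y)} {j : C(Y, X)}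
    (h : (j.comp p).Homotopic (ContinuousMap.id X)) {α : Cochain X n} (hα : IsCocycleOn univ α)
    (hjα : IsCoboundaryOn univ (pullback j α)) : IsCoboundaryOn univ α :=
  (isCoboundaryOn_univ_add_pullback h hα).of_add (hjα.pullback (f := p) (mapsTo_univ _ _))

/-- The map `j` identifies `F` with a deformation retract of the subspace `A`. -/
def IsDeformationRetract (j : C(F, G)) (A : Set G) : Prop :=
  ∃ (p : C(A, F)) (jA : C(F, A)), (inclusion A).comp jA = j ∧
    p.comp jA = ContinuousMap.id F ∧ (jA.comp p).Homotopic (ContinuousMap.id A)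

namespace IsDeformationRetract

variable {j : C(F, G)} {A : Set G}

theorem mem (h : IsDeformationRetract j A) (f : F) : j f ∈ A := by
  obtain ⟨_, jA, rfl, -, -⟩ := h
  exact (jA f).2

theorem exists_pullback_eq (h : IsDeformationRetract j A) {x : Cochain F n}
    (hx : IsCocycleOn univ x) : ∃ xA : Cochain G n, IsCocycleOn A xA ∧ pullback j xA = x := by
  obtain ⟨p, jA, rfl, hp, -⟩ := h
  obtain ⟨xA, hxA⟩ := exists_pullback_inclusion_eq (pullback p x)
  refine ⟨xA, isCocycleOn_univ_pullback_inclusion.1 ?_, ?_⟩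
  · rw [hxA]
    exact hx.pullback (mapsTo_univ _ _)
  · rw [← pullback_pullback, hxA, pullback_pullback, hp, pullback_id]

theorem isCoboundaryOn (h : IsDeformationRetract j A) {α : Cochain G n} (hα : IsCocycleOn A α)
    (hjα : IsCoboundaryOn univ (pullback j α)) : IsCoboundaryOn A α := by
  obtain ⟨_, _, rfl, -, hid⟩ := h
  exact isCoboundaryOn_univ_pullback_inclusion.1 (isCoboundaryOn_univ_of_homotopic_id hid
    (isCocycleOn_univ_pullback_inclusion.2 hα) hjα)

theorem isAcyclicOn (h : IsDeformationRetract j A) (hF : IsAcyclicOn n (univ : Set F)) :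
    IsAcyclicOn n A := fun _ hα =>
  h.isCoboundaryOn hα (hF _ (hα.pullback fun f _ => h.mem f))

end IsDeformationRetract

end DeformationRetracts

section SphereClutching

open Set
open scoped ContinuousMap

variable {F G : Type*} [TopologicalSpace F] [TopologicalSpace G] {n q r : ℕ}

/-- The decomposition of the total space `G` of a fibration over a sphere of dimension `q + 1` with
fibre `F` into the parts lying over the complements of the two poles: both parts deformation
retract onto a common fibre, and their intersection is the product of `F` with the `q`-sphere. -/
structure SphereClutching (F G : Type*) [TopologicalSpace F] [TopologicalSpace G] (q : ℕ) where
  left : Set G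
  right : Set G
  isOpen_left : IsOpen left
  isOpen_right : IsOpen right
  union_eq_univ : left ∪ right = univ
  fiber : C(F, G)
  isDeformationRetract_left : IsDeformationRetract fiber left
  isDeformationRetract_right : IsDeformationRetract fiber right
  equiv : sphereProd F (q + 1) ≃ₕ ↥(left ∩ right)
  equiv_slice (f : F) :
    (equiv ⟨slice (Pi.single 0 1) f, slice_mem_sphereProd one_ne_zero q.succ_pos f⟩ : G) = fiber f

namespace SphereClutching

theorem exists_pullback_inclusion_eq (S : SphereClutching F G q) (γ : Cochain G n) :
    ∃ α : Cochain (F × (ℕ → ℝ)) n,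
      pullback (inclusion (sphereProd F (q + 1))) α =
        pullback S.equiv.toFun (pullback (inclusion _) γ) ∧
      pullback (slice (Pi.single 0 1)) α = pullback S.fiber γ := by
  obtain ⟨α, hα⟩ := CoveringType.exists_pullback_inclusion_eq
    (pullback S.equiv.toFun (pullback (inclusion (S.left ∩ S.right)) γ))
  let i : C(F, sphereProd F (q + 1)) :=
    ⟨fun f => ⟨slice (Pi.single 0 1) f, slice_mem_sphereProd one_ne_zero q.succ_pos f⟩,
      by fun_prop⟩
  have hfiber : (inclusion _).comp (S.equiv.toFun.comp i) = S.fiber :=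
    ContinuousMap.ext S.equiv_slice
  refine ⟨α, hα, ?_⟩
  calc pullback (slice (Pi.single 0 1)) α
    _ = pullback i (pullback (inclusion _) α) := rfl
    _ = pullback ((inclusion _).comp (S.equiv.toFun.comp i)) γ := by rw [hα]; rfl
    _ = pullback S.fiber γ := by rw [hfiber]

theorem isCoboundaryOn_inter (S : SphereClutching F G q) (hn : n ≤ q) {γ : Cochain G n}
    (hγ : IsCocycleOn (S.left ∩ S.right) γ) (hγF : IsCoboundaryOn univ (pullback S.fiber γ)) :
    IsCoboundaryOn (S.left ∩ S.right) γ := by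
  obtain ⟨α, hα, hαF⟩ := S.exists_pullback_inclusion_eq γ
  rw [← isCocycleOn_univ_pullback_inclusion] at hγ
  rw [← isCoboundaryOn_univ_pullback_inclusion]
  refine isCoboundaryOn_univ_of_homotopic_id S.equiv.right_inv hγ ?_
  rw [← hα, isCoboundaryOn_univ_pullback_inclusion]
  refine isCoboundaryOn_sphereProd_of_slice (Nat.lt_succ_of_le hn) ?_ (hαF ▸ hγF)
  rw [← isCocycleOn_univ_pullback_inclusion, hα]
  exact hγ.pullback (mapsTo_univ _ _)

theorem exists_isCocycleOn_pullback_fiber_eq (S : SphereClutching F G q) (hn : n < q)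
    {x : Cochain F (n + 1)} (hx : IsCocycleOn univ x) :
    ∃ x' : Cochain G (n + 1), IsCocycleOn univ x' ∧ pullback S.fiber x' = x := by
  classical
  obtain ⟨xA, hxA, hjA⟩ := S.isDeformationRetract_left.exists_pullback_eq hx
  obtain ⟨xB, hxB, hjB⟩ := S.isDeformationRetract_right.exists_pullback_eq hx
  have hAB : IsCocycleOn (S.left ∩ S.right) (xA + xB) :=
    (hxA.mono inter_subset_left).add (hxB.mono inter_subset_right)
  obtain ⟨β, hβ⟩ : IsCoboundaryOn (S.left ∩ S.right) (xA + xB) := by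
    refine S.isCoboundaryOn_inter hn hAB ?_
    rw [map_add, hjA, hjB, ZModModule.add_self]
    exact isCoboundaryOn_zero
  -- The cocycles `xA + coboundary β` and `xB` agree over the intersection.
  let x₀ : Cochain G (n + 1) := (simplicesIn S.right _).piecewise xB (xA + coboundary β)
  have hB : EqOn x₀ xB (simplicesIn S.right _) := piecewise_eqOn _ _ _
  have hA : EqOn x₀ (xA + coboundary β) (simplicesIn S.left _) := fun σ hσ => by
    by_cases hσB : σ ∈ simplicesIn S.right _
    · rw [hB hσB, Pi.add_apply, ← hβ fun t => ⟨hσ t, hσB t⟩, Pi.add_apply, ← add_assoc,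
        ZModModule.add_self, zero_add]
    · exact piecewise_eq_of_notMem _ _ _ hσB
  obtain ⟨x', hx', hx'₀⟩ := exists_isCocycleOn_union_eqOn S.isOpen_left S.isOpen_right
    ((hxA.add (isCocycleOn_coboundary _ β)).congr hA) (hxB.congr hB)
  rw [S.union_eq_univ] at hx'
  refine ⟨x', hx', ?_⟩
  rw [← hjB]
  funext σ
  have hσ : S.fiber.comp σ ∈ simplicesIn S.right _ := fun t => S.isDeformationRetract_right.mem _
  exact (hx'₀ (Or.inr hσ)).trans (hB hσ)

theorem exists_isCupProductOn_pullback_fiber_eq (S : SphereClutching F G q) {ds : List ℕ}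
    {y : Cochain F (r + 1)} (hy : IsCupProductOn univ ds y) (hds : ∀ d ∈ ds, d < q) :
    ∃ y' : Cochain G (r + 1), IsCupProductOn univ ds y' ∧ pullback S.fiber y' = y := by
  induction hy with
  | one => exact ⟨1, .one, rfl⟩
  | cup h hx _ ih =>
    rw [List.forall_mem_cons] at hds
    obtain ⟨x', hx', rfl⟩ := S.exists_isCocycleOn_pullback_fiber_eq hds.1 hx
    obtain ⟨y', hy', rfl⟩ := ih hds.2
    exact ⟨cup h x' y', .cup h hx' hy', rfl⟩

theorem isAcyclicOn_univ (S : SphereClutching F G q)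
    (hF : ∀ n ≥ r + 2, IsAcyclicOn n (univ : Set F)) (hn : r + (q + 1) + 2 ≤ n) :
    IsAcyclicOn n (univ : Set G) := by
  obtain ⟨n, rfl⟩ := Nat.exists_eq_succ_of_ne_zero (by lia : n ≠ 0)
  rw [← S.union_eq_univ]
  refine IsAcyclicOn.union S.isOpen_left S.isOpen_right
    (S.isDeformationRetract_left.isAcyclicOn (hF _ (by lia)))
    (S.isDeformationRetract_right.isAcyclicOn (hF _ (by lia))) (isAcyclicOn_univ_subtype.1 ?_)
  have hsphere : IsAcyclicOn n (univ : Set (sphereProd F (q + 1))) :=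
    isAcyclicOn_univ_subtype.2 (isAcyclicOn_sphereProd (Nat.le_add_left 2 r) hF (by lia))
  exact fun γ hγ => isCoboundaryOn_univ_of_homotopic_id S.equiv.right_inv hγ
    (hsphere _ (hγ.pullback (mapsTo_univ _ _)))

theorem exists_fundamentalClass_inter (S : SphereClutching F G (q + 1)) :
    ∃ w : Cochain G (q + 2), IsCocycleOn (S.left ∩ S.right) w ∧
      ∀ {r r' : ℕ} (h : r + (q + 1) = r') {y : Cochain G (r + 1)},
        IsCocycleOn (S.left ∩ S.right) y → ¬ IsUnreducedCoboundary (pullback S.fiber y) →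
        ¬ IsCoboundaryOn (S.left ∩ S.right) (cup h y w) := by
  obtain ⟨v, hv⟩ := exists_isFundamentalClass F (q + 1)
  have hvc := isCocycleOn_univ_pullback_inclusion.2 hv.isCocycleOn
  obtain ⟨w, hw⟩ := CoveringType.exists_pullback_inclusion_eq
    (pullback S.equiv.invFun (pullback (inclusion _) v))
  refine ⟨w, ?_, fun h y hy hyF hcob => ?_⟩
  · rw [← isCocycleOn_univ_pullback_inclusion, hw]
    exact hvc.pullback (mapsTo_univ _ _)
  · obtain ⟨α, hα, hαF⟩ := S.exists_pullback_inclusion_eq y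
    have hαc : IsCocycleOn univ (pullback (inclusion (sphereProd F (q + 2))) α) := by
      rw [hα]
      exact (isCocycleOn_univ_pullback_inclusion.2 hy).pullback (mapsTo_univ _ _)
    refine hv.not_isCoboundaryOn_cup h (isCocycleOn_univ_pullback_inclusion.1 hαc) (hαF ▸ hyF) ?_
    rw [← isCoboundaryOn_univ_pullback_inclusion, pullback_cup] at hcob ⊢
    have hew : IsCoboundaryOn univ (cup h (pullback (inclusion _) α)
        (pullback S.equiv.toFun (pullback (inclusion _) w))) := by
      rw [hα]
      exact hcob.pullback (f := S.equiv.toFun) (mapsTo_univ _ _)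
    have hsum := IsCoboundaryOn.cup_right h hαc
      (isCoboundaryOn_univ_add_pullback S.equiv.left_inv hvc)
    rw [← pullback_pullback, ← hw, cup_add] at hsum
    exact hsum.of_add hew

theorem exists_isCupProductOn_append (S : SphereClutching F G (q + 1)) {ds : List ℕ}
    {y : Cochain F (r + 1)} (hy : IsCupProductOn univ ds y) (hyn : ¬ IsUnreducedCoboundary y)
    (hds : ∀ d ∈ ds, d < q + 1) (hF : ∀ n ≥ r + 2, IsAcyclicOn n (univ : Set F)) :
    ∃ y' : Cochain G (r + (q + 2) + 1),
      IsCupProductOn univ (ds ++ [q + 2]) y' ∧ ¬ IsUnreducedCoboundary y' := by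
  obtain ⟨y', hy', rfl⟩ := S.exists_isCupProductOn_pullback_fiber_eq hy hds
  obtain ⟨w, hw, hwn⟩ := S.exists_fundamentalClass_inter
  obtain ⟨c, hc, hcA, hcB⟩ := exists_connectingCocycle S.isOpen_left S.isOpen_right hw
  rw [S.union_eq_univ] at hc
  refine ⟨cup rfl y' c, hy'.append hc rfl, fun hcob => ?_⟩
  have hcob' : IsCoboundaryOn (S.left ∪ S.right) (cup rfl y' c) := by
    rw [S.union_eq_univ]
    exact hcob
  obtain ⟨a, b, ha, hb, hab⟩ := exists_isCocycleOn_add_eq_cup rfl rfl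
    (hy'.isCocycleOn.mono (subset_univ _)) hcA hcB hcob'
  refine hwn rfl (hy'.isCocycleOn.mono (subset_univ _)) hyn ?_
  rw [← hab]
  exact ((S.isDeformationRetract_left.isAcyclicOn (hF _ (by lia)) _ ha).mono
    inter_subset_left).add
    ((S.isDeformationRetract_right.isAcyclicOn (hF _ (by lia)) _ hb).mono inter_subset_right)

end SphereClutching

end SphereClutching

section SphereProd

open Set
open scoped ContinuousMap

variable {F : Type*} [TopologicalSpace F] {m : ℕ}

/-- Points of `ℕ → ℝ` with a nonzero coordinate among the first `m` retract onto the nonzero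
vectors of `ℝᵐ`. -/
def sphereProdHomotopyEquiv (F : Type*) [TopologicalSpace F] (m : ℕ) :
    sphereProd F m ≃ₕ {x : EuclideanSpace ℝ (Fin m) // x ≠ 0} × F where
  toFun :=
    { toFun z := (⟨WithLp.toLp 2 fun i => z.1.2 i, by
        obtain ⟨i, hi, hz⟩ := z.2
        exact fun h => hz (congr($h ⟨i, hi⟩))⟩, z.1.1)
      continuous_toFun := by fun_prop }
  invFun :=
    { toFun z := ⟨(z.2, fun i => if h : i < m then z.1.1 ⟨i, h⟩ else 0), by
        obtain ⟨i, hi⟩ : ∃ i, z.1.1 i ≠ 0 := by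
          by_contra! h
          exact z.1.2 (PiLp.ext h)
        exact ⟨i, i.2, by simpa using hi⟩⟩
      continuous_toFun := by
        refine (continuous_snd.prodMk (continuous_pi fun i => ?_)).subtype_mk _
        split_ifs <;> fun_prop }
  left_inv := ⟨
    { toFun z := ⟨(z.2.1.1, fun i => if i < m then z.2.1.2 i else z.1 * z.2.1.2 i), by
        obtain ⟨i, hi, hz⟩ := z.2.2
        exact ⟨i, hi, by simpa [hi] using hz⟩⟩
      continuous_toFun := by
        refine ((by fun_prop : Continuous _).prodMk (continuous_pi fun i => ?_)).subtype_mk _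
        split_ifs <;> fun_prop
      map_zero_left z := by
        refine Subtype.ext (Prod.ext rfl (funext fun i => ?_))
        by_cases hi : i < m <;> simp [hi]
      map_one_left z := by simp }⟩
  right_inv := by
    convert ContinuousMap.Homotopic.refl _
    ext z i <;> simp

theorem sphereProdHomotopyEquiv_slice (f : F) (q : ℕ) :
    sphereProdHomotopyEquiv F (q + 1)
        ⟨slice (Pi.single 0 1) f, slice_mem_sphereProd one_ne_zero q.succ_pos f⟩ =
      (⟨EuclideanSpace.single 0 1, by simp⟩, f) := by
  refine Prod.ext (Subtype.ext (PiLp.ext fun i => ?_)) rfl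
  change (Pi.single 0 1 : ℕ → ℝ) i = _
  simp [Pi.single_apply]

end SphereProd

section SphereBundles

open Set Topology
open scoped ContinuousMap

variable {B F G X : Type*} [TopologicalSpace B] [TopologicalSpace F] [TopologicalSpace G]

theorem homotopic_const_id [ContractibleSpace B] (b : B) :
    (ContinuousMap.const B b).Homotopic (ContinuousMap.id B) := by
  obtain ⟨y, hy⟩ := id_nullhomotopic B
  exact (hy.comp (ContinuousMap.Homotopic.refl (ContinuousMap.const B b))).trans hy.symm

theorem isDeformationRetract_of_homeomorph [ContractibleSpace B] {A : Set G} (h : B × F ≃ₜ A)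
    (b : B) (φ : F ≃ₜ F) {j : C(F, G)} (hj : ∀ f, j f = h (b, φ f)) :
    IsDeformationRetract j A := by
  refine ⟨⟨fun a => φ.symm (h.symm a).2, by fun_prop⟩, ⟨fun f => h (b, φ f), by fun_prop⟩, ?_, ?_,
    ?_⟩
  · ext f
    exact (hj f).symm
  · ext f
    simp
  · obtain ⟨H⟩ := homotopic_const_id b
    exact ⟨
      { toFun z := h (H (z.1, (h.symm z.2).1), (h.symm z.2).2)
        continuous_toFun := by fun_prop
        map_zero_left a := by simp
        map_one_left a := by simp }⟩

variable [Group F] [Group G] [IsTopologicalGroup G] [TopologicalSpace X] {ι : F →* G} {π : C(G, X)}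

/-- A section over `V` trivializes the bundle of left cosets `π : G → G ⧸ ι F` over `V`. -/
noncomputable def cosetTrivialization (hι : IsEmbedding ι)
    (hπ : ∀ g g', π g = π g' ↔ g⁻¹ * g' ∈ ι.range) {V : Set X} (s : C(V, G))
    (hs : ∀ v, π (s v) = v) : V × F ≃ₜ π ⁻¹' V :=
  have hmul (v : V) (f : F) : π (s v * ι f) = v := by
    rw [← hs v, eq_comm, hπ, inv_mul_cancel_left]
    exact ⟨f, rfl⟩
  have hmem (g : π ⁻¹' V) : (s ⟨π g, g.2⟩)⁻¹ * g ∈ range ι := (hπ _ _).1 (hs _)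
  { toFun z := ⟨s z.1 * ι z.2, by rw [mem_preimage, hmul]; exact z.1.2⟩
    invFun g := (⟨π g, g.2⟩, hι.toHomeomorph.symm ⟨(s ⟨π g, g.2⟩)⁻¹ * g, hmem g⟩)
    left_inv z := by
      refine Prod.ext (Subtype.ext (hmul z.1 z.2)) ?_
      rw [Homeomorph.symm_apply_eq]
      simp [Subtype.ext_iff, hmul]
    right_inv g := by
      have h := congrArg Subtype.val (hι.toHomeomorph.apply_symm_apply ⟨_, hmem g⟩)
      refine Subtype.ext ?_
      change s _ * ι _ = (g : G)
      rw [← eq_inv_mul_iff_mul_eq]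
      exact h
    continuous_toFun := by
      have := hι.continuous
      fun_prop
    continuous_invFun := by fun_prop }

theorem cosetTrivialization_apply (hι : IsEmbedding ι)
    (hπ : ∀ g g', π g = π g' ↔ g⁻¹ * g' ∈ ι.range) {V : Set X} (s : C(V, G))
    (hs : ∀ v, π (s v) = v) (z : V × F) :
    (cosetTrivialization hι hπ s hs z : G) = s z.1 * ι z.2 :=
  rfl

/-- The clutching decomposition of a topological group `G` with `G ⧸ ι F` a sphere, given by
sections over two contractible open sets `V` and `W`. -/
noncomputable def SphereClutching.ofSections [ContinuousMul F] (hι : IsEmbedding ι)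
    (hπ : ∀ g g', π g = π g' ↔ g⁻¹ * g' ∈ ι.range) {V W : Set X} (hV : IsOpen V) (hW : IsOpen W)
    (hVW : V ∪ W = univ) [ContractibleSpace V] [ContractibleSpace W] (s : C(V, G))
    (hs : ∀ v, π (s v) = v) (t : C(W, G)) (ht : ∀ w, π (t w) = w) {q : ℕ}
    (e : {x : EuclideanSpace ℝ (Fin (q + 1)) // x ≠ 0} ≃ₜ ↥(V ∩ W)) : SphereClutching F G q :=
  let x : ↥(V ∩ W) := e ⟨EuclideanSpace.single 0 1, by simp⟩
  let sV (v : ↥(V ∩ W)) : V := ⟨v, v.2.1⟩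
  { left := π ⁻¹' V
    right := π ⁻¹' W
    isOpen_left := hV.preimage π.continuous
    isOpen_right := hW.preimage π.continuous
    union_eq_univ := by rw [← preimage_union, hVW, preimage_univ]
    fiber := ⟨fun f => s (sV x) * ι f, continuous_const.mul hι.continuous⟩
    isDeformationRetract_left := isDeformationRetract_of_homeomorph
      (cosetTrivialization hι hπ s hs) (sV x) (Homeomorph.refl F) fun _ => rfl
    isDeformationRetract_right := by
      obtain ⟨c, hc⟩ : (t ⟨x, x.2.2⟩)⁻¹ * s (sV x) ∈ ι.range := (hπ _ _).1 (by rw [hs, ht])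
      refine isDeformationRetract_of_homeomorph (cosetTrivialization hι hπ t ht) ⟨x, x.2.2⟩
        (Homeomorph.mulLeft c) fun f => ?_
      simp [cosetTrivialization_apply, hc, mul_assoc]
    equiv := ((sphereProdHomotopyEquiv F (q + 1)).trans
      (e.prodCongr (Homeomorph.refl F)).toHomotopyEquiv).trans
        (cosetTrivialization hι hπ (s.comp ⟨sV, by fun_prop⟩) fun v => hs _).toHomotopyEquiv
    equiv_slice f :=
      congrArg (fun z => s (sV (e z.1)) * ι z.2) (sphereProdHomotopyEquiv_slice f q) }

end SphereBundles

section Reflections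

open Matrix

variable {ι R : Type*} [Fintype ι] [DecidableEq ι] [DivisionRing R] [StarRing R]

/-- The identity plus the rank one matrix `-w (d*)⁻¹ w*`, a noncommutative Householder reflection
along `w` when `w* w = d + d*`. -/
def householder (w : ι → R) (d : R) : Matrix ι ι R :=
  1 - vecMulVec (fun i => w i * (star d)⁻¹) (star w)

theorem householder_mem_unitary {w : ι → R} {d : R} (hd : d ≠ 0) (hw : star w ⬝ᵥ w = d + star d) :
    householder w d ∈ unitary (Matrix ι ι R) := by
  let P (c : R) : Matrix ι ι R := vecMulVec (fun i => w i * c) (star w)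
  have hstar (c : R) : star (P c) = P (star c) := by
    ext i j
    simp [P, Matrix.star_apply, vecMulVec_apply, mul_assoc]
  have hmul (c c' : R) : P c * P c' = P (c * (d + star d) * c') := by
    rw [← hw]
    ext i j
    simp [P, Matrix.mul_apply, vecMulVec_apply, dotProduct, Finset.mul_sum, Finset.sum_mul,
      mul_assoc]
  have hadd (c c' : R) : P c + P c' = P (c + c') := by
    ext i j
    simp [P, vecMulVec_apply, mul_add, add_mul]
  have hsd : star d ≠ 0 := star_ne_zero.2 hd
  have h₁ : (star d)⁻¹ * (d + star d) * d⁻¹ = (star d)⁻¹ + d⁻¹ := by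
    rw [mul_add, add_mul, inv_mul_cancel₀ hsd, one_mul, mul_inv_cancel_right₀ hd]
  have h₂ : d⁻¹ * (d + star d) * (star d)⁻¹ = (star d)⁻¹ + d⁻¹ := by
    rw [mul_add, add_mul, inv_mul_cancel₀ hd, one_mul, mul_inv_cancel_right₀ hsd]
  have hP : star (P (star d)⁻¹) = P d⁻¹ := by rw [hstar, star_inv₀, star_star]
  change 1 - P (star d)⁻¹ ∈ unitary _
  rw [Unitary.mem_iff, star_sub, star_one, hP]
  constructor
  · rw [sub_mul, one_mul, mul_sub, mul_one, hmul, h₂, ← hadd]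
    abel
  · rw [sub_mul, one_mul, mul_sub, mul_one, hmul, h₁, ← hadd]
    abel

/-- The unitary matrix carrying the `k`-th basis vector to a given unit vector `u` with `u k ≠ 1`
and fixing the vectors orthogonal to both. -/
def rotationTo (k : ι) (u : ι → R) : Matrix ι ι R :=
  householder (Pi.single k 1 - u) (1 - u k)

variable {k : ι} {u : ι → R}

theorem rotationTo_mem_unitary (hu : star u ⬝ᵥ u = 1) (huk : u k ≠ 1) :
    rotationTo k u ∈ unitary (Matrix ι ι R) := by
  refine householder_mem_unitary (sub_ne_zero.2 huk.symm) ?_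
  simp [sub_dotProduct, dotProduct_sub, hu]
  abel

theorem rotationTo_mulVec_single_self (huk : u k ≠ 1) :
    rotationTo k u *ᵥ Pi.single k 1 = u := by
  have h : star (1 - u k) ≠ 0 := star_ne_zero.2 (sub_ne_zero.2 huk.symm)
  ext i
  rw [star_sub, star_one] at h
  simp [rotationTo, householder, vecMulVec_apply, mul_assoc, inv_mul_cancel₀ h, Matrix.one_apply,
    Pi.single_apply]

theorem rotationTo_mulVec_single {i : ι} (hik : i ≠ k) (hi : u i = 0) :
    rotationTo k u *ᵥ Pi.single i 1 = Pi.single i 1 := by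
  ext j
  simp [rotationTo, householder, vecMulVec_apply, hik, hi, Matrix.one_apply, Pi.single_apply]

end Reflections

section Stereographic

open Metric Module Set

variable {E : Type*} [NormedAddCommGroup E] [InnerProductSpace ℝ E]

theorem contractibleSpace_compl_pole (v : sphere (0 : E) 1) :
    ContractibleSpace ↥({v}ᶜ : Set (sphere (0 : E) 1)) := by
  have e := (stereographic (norm_eq_of_mem_sphere v)).toHomeomorphSourceTarget
  rw [stereographic_source, stereographic_target] at e
  exact (e.trans (Homeomorph.Set.univ _)).contractibleSpace

variable {m : ℕ} [Fact (finrank ℝ E = m + 1)]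

theorem stereographic'_eq_zero_iff {v x : sphere (0 : E) 1} (hx : x ≠ v) :
    stereographic' m v x = 0 ↔ x = -v := by
  have hv : stereographic' m v (-v) = 0 := by
    simp [stereographic']
  have hmem {y} (hy : y ≠ v) : y ∈ (stereographic' m v).source := by
    rwa [stereographic'_source]
  rw [← hv]
  exact (stereographic' m v).injOn.eq_iff (hmem hx) (hmem (ne_neg_of_mem_unit_sphere ℝ v).symm)

/-- Stereographic projection identifies the sphere without its poles `v` and `-v` with the nonzero
vectors of a Euclidean space. -/
noncomputable def complPolesHomeomorph (v : sphere (0 : E) 1) :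
    {x : EuclideanSpace ℝ (Fin m) // x ≠ 0} ≃ₜ ↥({v}ᶜ ∩ {-v}ᶜ : Set (sphere (0 : E) 1)) :=
  have h : (stereographic' m v).IsImage {-v}ᶜ {0}ᶜ := fun x hx => by
    rw [stereographic'_source] at hx
    exact (stereographic'_eq_zero_iff hx).not
  have htarget : {x | x ≠ 0} = (stereographic' m v).target ∩ {0}ᶜ := by
    rw [stereographic'_target, univ_inter]
    rfl
  (Homeomorph.setCongr htarget).trans
    ((h.restr ((stereographic' m v).open_source.inter isOpen_compl_singleton)
      ).toHomeomorphSourceTarget.symm.trans (Homeomorph.setCongr (by simp)))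

end Stereographic

section LeadingSphere

open Matrix Metric Module Quaternion Set
open scoped InnerProductSpace

variable {N : ℕ} {k : Fin N}

/-- The vectors of `ℍᴺ`, with their Euclidean norm, all of whose coordinates after the `k`-th
vanish. -/
noncomputable def leadingSubspace (k : Fin N) : Submodule ℝ (PiLp 2 fun _ : Fin N => ℍ[ℝ]) :=
  (⨅ i ∈ Ioi k, LinearMap.ker (LinearMap.proj i)).comap
    (WithLp.linearEquiv 2 ℝ (Fin N → ℍ[ℝ])).toLinearMap

theorem mem_leadingSubspace {v : PiLp 2 fun _ : Fin N => ℍ[ℝ]} :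
    v ∈ leadingSubspace k ↔ ∀ i, k < i → v i = 0 := by
  simp [leadingSubspace]

theorem finrank_leadingSubspace (k : Fin N) : finrank ℝ (leadingSubspace k) = 4 * (k + 1) := by
  have hI : IsCompl (Iic k) (Ioi k) := by
    rw [← compl_Iic]
    exact isCompl_compl
  let e := ((WithLp.linearEquiv 2 ℝ (Fin N → ℍ[ℝ])).ofSubmodule' _).trans
    (LinearMap.iInfKerProjEquiv ℝ (fun _ => ℍ[ℝ]) hI.disjoint hI.codisjoint.top_le)
  rw [leadingSubspace, e.finrank_eq]
  simp [finrank_pi_fintype, Quaternion.finrank_eq_four, mul_comm]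

/-- The unit sphere of `ℍᵏ⁺¹`, inside `ℍᴺ`. -/
abbrev leadingSphere (k : Fin N) : Type := sphere (0 : leadingSubspace k) 1

theorem star_dotProduct_self (v : PiLp 2 fun _ : Fin N => ℍ[ℝ]) :
    star v.ofLp ⬝ᵥ v.ofLp = (‖v‖ ^ 2 : ℝ) := by
  rw [PiLp.norm_sq_eq_of_L2, ← Quaternion.algebraMap_def, map_sum]
  refine Finset.sum_congr rfl fun i _ => ?_
  rw [Pi.star_apply, Quaternion.star_mul_self, normSq_eq_norm_mul_self, sq,
    Quaternion.algebraMap_def]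

namespace leadingSphere

/-- The coordinates in `ℍᴺ` of a point of the sphere. -/
abbrev coord (x : leadingSphere k) : Fin N → ℍ[ℝ] := x.1.1.ofLp

theorem coord_of_lt (x : leadingSphere k) {i : Fin N} (hi : k < i) : x.coord i = 0 :=
  mem_leadingSubspace.1 x.1.2 i hi

theorem star_coord_dotProduct_coord (x : leadingSphere k) : star x.coord ⬝ᵥ x.coord = 1 := by
  rw [star_dotProduct_self, ← Submodule.coe_norm, norm_eq_of_mem_sphere, one_pow, coe_one]

/-- The point of the sphere with the coordinates of a unit vector. -/
noncomputable def mk (v : Fin N → ℍ[ℝ]) (hv : ∀ i, k < i → v i = 0) (hv₁ : star v ⬝ᵥ v = 1) :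
    leadingSphere k :=
  ⟨⟨WithLp.toLp 2 v, mem_leadingSubspace.2 hv⟩, by
    rw [mem_sphere_zero_iff_norm, Submodule.coe_norm, ← sq_eq_sq₀ (norm_nonneg _) zero_le_one,
      ← coe_inj, ← star_dotProduct_self, hv₁, one_pow, coe_one]⟩

/-- The last standard basis vector, as the pole of the sphere. -/
noncomputable def pole (k : Fin N) : leadingSphere k :=
  mk (Pi.single k 1) (fun _ hi => Pi.single_eq_of_ne hi.ne' _) (by simp)

theorem coord_self_ne_one {x : leadingSphere k} (hx : x ≠ pole k) : x.coord k ≠ 1 := by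
  refine fun h => hx ((sphere_ext_iff x (pole k)).2 ?_)
  rw [Submodule.coe_inner, PiLp.inner_apply]
  calc ∑ i, ⟪x.coord i, (Pi.single k 1 : Fin N → ℍ[ℝ]) i⟫_ℝ
    _ = ⟪x.coord k, (Pi.single k 1 : Fin N → ℍ[ℝ]) k⟫_ℝ :=
      Finset.sum_eq_single k (fun i _ hi => by rw [Pi.single_eq_of_ne hi, inner_zero_right])
        (by simp)
    _ = 1 := by rw [h, Pi.single_eq_same, Quaternion.inner_self, map_one]

theorem coord_injective : Function.Injective (coord (k := k)) := fun _ _ h =>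
  Subtype.ext (Subtype.ext (PiLp.ext (congrFun h)))

end leadingSphere

end LeadingSphere

section CompactSymplectic

open Matrix Metric Module Quaternion Set

variable {N : ℕ}

theorem star_mulVec_eq_iff {ι R : Type*} [Fintype ι] [DecidableEq ι] [Ring R] [StarRing R]
    (g : unitary (Matrix ι ι R)) {v w : ι → R} : star g.1 *ᵥ w = v ↔ g.1 *ᵥ v = w := by
  constructor <;> rintro rfl <;> simp [mulVec_mulVec]

/-- The copy of the compact symplectic group `Sp(k)` inside `Sp(N)` acting on the first `k`
coordinates. -/
def spSubgroup (N k : ℕ) : Subgroup (unitary (Matrix (Fin N) (Fin N) ℍ[ℝ])) where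
  carrier := {g | ∀ i : Fin N, k ≤ i → g.1 *ᵥ Pi.single i 1 = Pi.single i 1}
  mul_mem' {a b} ha hb i hi := by
    rw [Submonoid.coe_mul, ← mulVec_mulVec, hb i hi, ha i hi]
  one_mem' i _ := one_mulVec _
  inv_mem' {a} ha i hi := (star_mulVec_eq_iff a).2 (ha i hi)

theorem spSubgroup_mono {k l : ℕ} (h : k ≤ l) : spSubgroup N k ≤ spSubgroup N l :=
  fun _ hg i hi => hg i (h.trans hi)

theorem eq_zero_of_mem_spSubgroup {k : ℕ} {g : unitary (Matrix (Fin N) (Fin N) ℍ[ℝ])}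
    (hg : g ∈ spSubgroup N k) {i j : Fin N} (hi : k ≤ i) (hij : i ≠ j) : g.1 i j = 0 := by
  have h := congrFun (inv_mem hg i hi) j
  rw [mulVec_single_one, Pi.single_eq_of_ne hij.symm] at h
  exact star_eq_zero.1 h

variable {k : Fin N}

/-- The orbit map of the last basis vector under `Sp(k + 1)`. -/
noncomputable def orbitMap (k : Fin N) : C(spSubgroup N (k + 1), leadingSphere k) where
  toFun g := leadingSphere.mk (g.1.1 *ᵥ Pi.single k 1)
    (fun i hi => by
      rw [mulVec_single_one]
      exact eq_zero_of_mem_spSubgroup g.2 hi hi.ne')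
    (by rw [star_mulVec, dotProduct_mulVec, vecMul_vecMul, ← star_eq_conjTranspose,
      Unitary.coe_star_mul_self, vecMul_one]; simp)
  continuous_toFun := by
    unfold leadingSphere.mk
    fun_prop

theorem coord_orbitMap (g : spSubgroup N (k + 1)) :
    (orbitMap k g).coord = g.1.1 *ᵥ Pi.single k 1 :=
  rfl

theorem orbitMap_eq_iff (g g' : spSubgroup N (k + 1)) :
    orbitMap k g = orbitMap k g' ↔
      g⁻¹ * g' ∈ (Subgroup.inclusion (spSubgroup_mono (N := N) (Nat.le_succ k))).range := by
  rw [Subgroup.inclusion_range, Subgroup.mem_subgroupOf, ← leadingSphere.coord_injective.eq_iff,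
    coord_orbitMap, coord_orbitMap, ← star_mulVec_eq_iff, mulVec_mulVec]
  refine ⟨fun h i hi => ?_, fun h => h k le_rfl⟩
  obtain rfl | hlt := (show k ≤ i from hi).eq_or_lt
  · exact h
  · exact (g⁻¹ * g').2 i hlt

/-- The canonical rotation in `Sp(k + 1)` carrying the pole to a given other point. -/
noncomputable def rotation (k : Fin N) :
    C(({leadingSphere.pole k}ᶜ : Set (leadingSphere k)), spSubgroup N (k + 1)) where
  toFun x := ⟨⟨rotationTo k x.1.coord, rotationTo_mem_unitary x.1.star_coord_dotProduct_coord
    (leadingSphere.coord_self_ne_one x.2)⟩, fun _ hi =>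
      rotationTo_mulVec_single (Fin.ne_of_gt hi) (x.1.coord_of_lt hi)⟩
  continuous_toFun := by
    have h (x : ({leadingSphere.pole k}ᶜ : Set (leadingSphere k))) : star (1 - x.1.coord k) ≠ 0 :=
      star_ne_zero.2 (sub_ne_zero.2 (leadingSphere.coord_self_ne_one x.2).symm)
    unfold rotationTo householder
    refine ((continuous_matrix fun i j => ?_).subtype_mk _).subtype_mk _
    simp only [Matrix.sub_apply, vecMulVec_apply, Pi.star_apply, Pi.sub_apply]
    fun_prop (disch := exact h _)

theorem orbitMap_rotation (x : ({leadingSphere.pole k}ᶜ : Set (leadingSphere k))) :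
    orbitMap k (rotation k x) = x :=
  leadingSphere.coord_injective
    (rotationTo_mulVec_single_self (leadingSphere.coord_self_ne_one x.2))

/-- The section of `orbitMap k` away from the antipode of the pole that reaches a point `w` through
the antipode: the rotation to `-w` carries the antipode to `w`. -/
noncomputable def rotationViaAntipode (k : Fin N) :
    C(({-leadingSphere.pole k}ᶜ : Set (leadingSphere k)), spSubgroup N (k + 1)) where
  toFun w := rotation k ⟨-w.1, fun h => w.2 (neg_eq_iff_eq_neg.1 h)⟩ *
    rotation k ⟨-leadingSphere.pole k, (ne_neg_of_mem_unit_sphere ℝ _).symm⟩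
  continuous_toFun :=
    ((rotation k).continuous.comp (continuous_subtype_val.neg.subtype_mk _)).mul continuous_const

theorem orbitMap_rotationViaAntipode (w : ({-leadingSphere.pole k}ᶜ : Set (leadingSphere k))) :
    orbitMap k (rotationViaAntipode k w) = w := by
  have h (x : ({leadingSphere.pole k}ᶜ : Set (leadingSphere k))) :
      (rotation k x).1.1 *ᵥ Pi.single k 1 = x.1.coord :=
    congrArg leadingSphere.coord (orbitMap_rotation x)
  refine leadingSphere.coord_injective ?_
  calc _
    _ = (rotation k _).1.1 *ᵥ ((rotation k _).1.1 *ᵥ Pi.single k 1) := (mulVec_mulVec _ _ _).symm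
    _ = (rotation k _).1.1 *ᵥ (-Pi.single k 1) := by rw [h]; rfl
    _ = w.1.coord := by rw [mulVec_neg, h]; exact neg_neg _

/-- The clutching decomposition of `Sp(k + 1)`, fibred over the sphere of dimension `4 * k + 3`
with fibre `Sp(k)`. -/
noncomputable def spClutching (k : Fin N) :
    SphereClutching (spSubgroup N k) (spSubgroup N (k + 1)) (4 * k + 2) :=
  let p := leadingSphere.pole k
  have hpole : {p} ∩ {-p} = (∅ : Set (leadingSphere k)) :=
    singleton_inter_eq_empty.2 (ne_neg_of_mem_unit_sphere ℝ p)
  have : Fact (finrank ℝ (leadingSubspace k) = 4 * k + 2 + 1 + 1) := ⟨finrank_leadingSubspace k⟩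
  have := contractibleSpace_compl_pole p
  have := contractibleSpace_compl_pole (-p)
  SphereClutching.ofSections (.inclusion (spSubgroup_mono k.1.le_succ)) orbitMap_eq_iff
    isOpen_compl_singleton isOpen_compl_singleton (by rw [← compl_inter, hpole, compl_empty])
    (rotation k) orbitMap_rotation (rotationViaAntipode k) orbitMap_rotationViaAntipode
    (complPolesHomeomorph p)

end CompactSymplectic

section GoodCover

open Set

variable {X Y : Type*} [TopologicalSpace X] [TopologicalSpace Y]

theorem IsAcyclicFamily.of_isGoodCover {U : Finset (Set Y)} (hU : IsGoodCover U) :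
    IsAcyclicFamily U id where
  isOpen := hU.1
  isAcyclicOn T hT hne hinter n := by
    simp only [id, ← Finset.mem_coe, ← sInter_eq_biInter] at hinter ⊢
    have := hU.2.2 T hT hne hinter
    exact isAcyclicOn_of_contractibleSpace n _

theorem IsCupProductOn.coverBound_le_card {ds : List ℕ} {r : ℕ} {y : Cochain X (r + 1)}
    (hy : IsCupProductOn univ ds y) (hn : ¬ IsCoboundaryOn univ y) (hpos : ∀ d ∈ ds, 0 < d)
    (hlt : ds.Pairwise (· < ·)) {p : C(X, Y)} {j : C(Y, X)}
    (h : (j.comp p).Homotopic (ContinuousMap.id X)) {ι : Type*} {s : Finset ι} {U : ι → Set Y}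
    (hU : IsAcyclicFamily s U) (hcover : ⋃ i ∈ s, U i = univ) : coverBound ds ≤ s.card := by
  refine hU.coverBound_le_card hpos hlt (hy.pullback (f := j) (mapsTo_univ _ _))
    fun hcob => hn ?_
  rw [hcover] at hcob
  exact isCoboundaryOn_univ_of_homotopic_id h hy.isCocycleOn hcob

end GoodCover

section SpCohomology

open Set Matrix Quaternion

variable {N : ℕ}

instance : Subsingleton (spSubgroup N 0) where
  allEq g g' := by
    have hcol (j : Fin N) : g.1.1.col j = g'.1.1.col j := by
      rw [← mulVec_single_one, ← mulVec_single_one, g.2 j j.1.zero_le, g'.2 j j.1.zero_le]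
    exact Subtype.ext (Subtype.ext (Matrix.ext fun i j => congrFun (hcol j) i))

theorem exists_isCupProductOn_spSubgroup {k : ℕ} (hk : k ≤ N) :
    ∃ (r : ℕ) (y : Cochain (spSubgroup N k) (r + 1)), IsCupProductOn univ (List.range' 3 k 4) y ∧
      ¬ IsUnreducedCoboundary y ∧ ∀ n ≥ r + 2, IsAcyclicOn n (univ : Set (spSubgroup N k)) := by
  induction k with
  | zero =>
    have : ContractibleSpace (univ : Set (spSubgroup N 0)) :=
      (Homeomorph.Set.univ _).contractibleSpace
    exact ⟨0, 1, .one, fun h => one_ne_zero (congrFun h (ContinuousMap.const _ 1)),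
      fun n _ => isAcyclicOn_of_contractibleSpace n univ⟩
  | succ k ih =>
    obtain ⟨r, y, hy, hyn, hacyc⟩ := ih (by lia)
    let S : SphereClutching (spSubgroup N k) (spSubgroup N (k + 1)) (4 * k + 2) :=
      spClutching ⟨k, hk⟩
    have hlt : ∀ d ∈ List.range' 3 k 4, d < 4 * k + 2 := fun d hd => by
      obtain ⟨i, hi, rfl⟩ := List.mem_range'.1 hd
      lia
    obtain ⟨y', hy', hyn'⟩ := S.exists_isCupProductOn_append hy hyn hlt hacyc
    refine ⟨_, y', ?_, hyn', fun n hn => S.isAcyclicOn_univ hacyc hn⟩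
    rwa [List.range'_concat, Nat.add_comm 3]

/-- The last stage `spSubgroup n n` of the filtration is the compact symplectic group itself. -/
def spSubgroupHomeomorph (n : ℕ) : spSubgroup n n ≃ₜ Sp n where
  toFun g := ⟨g.1.1, Unitary.coe_star_mul_self g.1⟩
  invFun A := ⟨⟨A.1, Unitary.mem_iff.2 ⟨A.2, mul_eq_one_comm.1 A.2⟩⟩,
    fun i hi => absurd i.2 hi.not_gt⟩
  continuous_toFun := Continuous.subtype_mk (by fun_prop) _
  continuous_invFun := (continuous_subtype_val.subtype_mk _).subtype_mk _

theorem exists_isCupProductOn_sp {n : ℕ} (hn : n ≠ 0) :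
    ∃ (r : ℕ) (y : Cochain (Sp n) (r + 1)), IsCupProductOn univ (List.range' 3 n 4) y ∧
      ¬ IsCoboundaryOn univ y := by
  obtain ⟨r, y, hy, hyn, -⟩ := exists_isCupProductOn_spSubgroup (le_refl n)
  obtain _ | r := r
  · obtain ⟨k, rfl⟩ := Nat.exists_eq_succ_of_ne_zero hn
    have hsum := hy.eq_sum
    rw [List.range', List.sum_cons] at hsum
    lia
  let e := spSubgroupHomeomorph n
  exact ⟨_, pullback (e.symm : C(Sp n, spSubgroup n n)) y, hy.pullback (mapsTo_univ _ _),
    fun hcob => hyn (isCoboundaryOn_univ_of_homotopic_id e.toHomotopyEquiv.left_inv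
      hy.isCocycleOn hcob)⟩

end SpCohomology

end CoveringType

open CoveringType

theorem stmt11_general {n : ℕ} (hn : 2 ≤ n) {Y : Type*} [TopologicalSpace Y] {p : C(Sp n, Y)}
    {j : C(Y, Sp n)} (h : (j.comp p).Homotopic (ContinuousMap.id (Sp n))) {ι : Type*}
    {s : Finset ι} {U : ι → Set Y} (hU : IsAcyclicFamily s U) (hcover : ⋃ i ∈ s, U i = Set.univ) :
    (8 * n ^ 3 + 9 * n ^ 2 + 7 * n + 12) / 6 ≤ s.card := by
  obtain ⟨r, y, hy, hyn⟩ := exists_isCupProductOn_sp (n := n) (by lia)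
  have hpos : ∀ d ∈ List.range' 3 n 4, 0 < d := fun d hd => by
    obtain ⟨i, -, rfl⟩ := List.mem_range'.1 hd
    lia
  have hbound : coverBound (List.range' 3 n 4) ≤ s.card :=
    hy.coverBound_le_card hyn hpos (List.pairwise_lt_range' 4) h hU hcover
  obtain ⟨k, rfl⟩ := Nat.exists_eq_add_of_le' hn
  have hformula := six_mul_coverBound_range' 3 k
  refine (Nat.div_le_of_le_mul (le_of_eq ?_)).trans hbound
  rw [hformula]
  ring

/-- The covering type of the compact symplectic group `Sp(n)` is at least
`(8n³+9n²+7n+12)/6`: every good cover of any space homotopy equivalent to `Sp(n)` has at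
least that many members.  (The numerator is divisible by 6, so `/` is exact.) -/
theorem stmt11 (n : ℕ) (hn : 2 ≤ n) (Y : Type*) [TopologicalSpace Y]
    (h : Nonempty (ContinuousMap.HomotopyEquiv (Sp n) Y))
    (U : Finset (Set Y)) (hU : IsGoodCover U) :
    (8 * n ^ 3 + 9 * n ^ 2 + 7 * n + 12) / 6 ≤ U.card := by
  obtain ⟨e⟩ := h
  exact stmt11_general hn e.left_inv (.of_isGoodCover hU) (Set.sUnion_eq_biUnion.symm.trans hU.2.1)
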